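/- arXiv:math/9808077 — 2 statements merged into one kernel-verified Lean document; each statement's English description precedes it below -/
import Mathlib

section
/- Cosmological Theorem (quantitative form, N = 29): There exists a closed audioactive system (S, u, v) such that for every string w all of whose entries lie in {1,2,3}, the string JHC^29(w) is a split compound of atoms each of which lies in S or equals u ++ [n] or v ++ [n] for some integer n ≥ 4. -/
/-!
The system consists of Conway's 92 elements and of the two transuranic families (`allElements`).

*Splitting.* The last letter of a string never changes, so `L.R` is a splitting as soon as no
descendant of `R` starts with the last letter `d` of `L` (`Sep d R`, `splits_of_sep`). Two
instances suffice: `d = 2` and `R` starting in one of three ways that succeed each other cyclically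
(`NoTwo`), and `d ≠ 2` and `R = 22`. Conversely, if a descendant of `R` starts with `d`, the two
sides interact (`not_splits`); a finite check at all cuts shows that the elements are atoms
(`InS.isAtom`).

*Reduction to a regular language.* After one day a string has no run of length four (`noFour_JHC`),
and it splits after each letter `n ≥ 4`, since all later strings begin with a run length which is at
most `3` (`sep_of_noFour`). So it is enough to treat strings `z` over `{1, 2, 3}` without runs of
length four, possibly followed by a single letter `n ≥ 4`, which is treated as a symbol `big`. The
strings `JHC z` form a regular language (`Input`).

*The cascade.* A transducer reads a word from right to left and computes its descendants for `k`
days on the fly, one level of the state for each day (`mach k`). Whenever one of the splittings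
above is recognized at some level, the piece to the right of it is complete; it is independent of
everything read later, so the levels below are finished off and restarted. Each level therefore
only has to remember the letter and the length of the current run and the first four letters of the
current piece, and a piece that reaches the bottom level has to be an element. For `k = 27` only
finitely many states (a few thousand) are reachable from words in the language `Input`, and an
exhaustive search (`search_true`), evaluated in the kernel, shows that all pieces at the bottom
level are elements.
With the two days spent in the reduction this gives `29 = 1 + 1 + 27`. The closedness of the system
is read off from `mach 1`.
-/

open Filter

/-- Conway's audioactive (look-and-say) operator: split into maximal runs
`a₁^{m₁} ⋯ a_r^{m_r}` and output `[m₁, a₁, …, m_r, a_r]`. -/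
def JHC (w : List ℕ) : List ℕ :=
  (w.splitBy (· == ·)).flatMap (fun r => [r.length, r.headI])

/-- A string is a nonempty finite list of positive integers. -/
def IsString (w : List ℕ) : Prop := w ≠ [] ∧ ∀ x ∈ w, 0 < x

/-- `w` splits as `L.R`. -/
def SplitsAs (w L R : List ℕ) : Prop :=
  w = L ++ R ∧ L ≠ [] ∧ R ≠ [] ∧ ∀ n : ℕ, JHC^[n] w = JHC^[n] L ++ JHC^[n] R

/-- An atom is a string admitting no splitting. -/
def IsAtomString (w : List ℕ) : Prop := IsString w ∧ ∀ L R, ¬ SplitsAs w L R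

/-- `w` is a split compound of the atoms in the list `As`. -/
def SplitCompound (w : List ℕ) (As : List (List ℕ)) : Prop :=
  (∀ A ∈ As, IsAtomString A) ∧ w = As.flatten ∧
    ∀ n : ℕ, JHC^[n] w = (As.map (fun A => JHC^[n] A)).flatten

/-- Membership in the system `(S, u, v)`: either in `S`, or of the form
`u ++ [n]` or `v ++ [n]` with `n ≥ 4`. -/
def InSystem (S : Finset (List ℕ)) (u v : List ℕ) (A : List ℕ) : Prop :=
  A ∈ S ∨ ∃ n : ℕ, 4 ≤ n ∧ (A = u ++ [n] ∨ A = v ++ [n])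

/-- A closed audioactive system. -/
structure ClosedAudioactiveSystem where
  S : Finset (List ℕ)
  u : List ℕ
  v : List ℕ
  S_atom : ∀ A ∈ S, IsAtomString A
  S_entries : ∀ A ∈ S, ∀ x ∈ A, x ∈ ({1, 2, 3} : Set ℕ)
  u_entries : ∀ x ∈ u, x ∈ ({1, 2, 3} : Set ℕ)
  v_entries : ∀ x ∈ v, x ∈ ({1, 2, 3} : Set ℕ)
  u_atom : ∀ n : ℕ, 4 ≤ n → IsAtomString (u ++ [n])
  v_atom : ∀ n : ℕ, 4 ≤ n → IsAtomString (v ++ [n])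
  closed : ∀ A, InSystem S u v A →
    ∃ As : List (List ℕ), SplitCompound (JHC A) As ∧ ∀ B ∈ As, InSystem S u v B

namespace Cosmo

/-! ### The look-and-say operator -/

theorem JHC_nil : JHC [] = [] := by simp [JHC]

theorem JHC_append {L R : List ℕ} (h : ∀ d ∈ L.getLast?, R.head? ≠ some d) :
    JHC (L ++ R) = JHC L ++ JHC R := by
  unfold JHC
  rw [List.splitBy_append, List.flatMap_append]
  intro x hx y hy
  have := h x hx
  rw [Option.mem_def.1 hy, ne_eq, Option.some.injEq] at this
  simpa using Ne.symm this

theorem JHC_replicate (m b : ℕ) : JHC (List.replicate (m + 1) b) = [m + 1, b] := by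
  unfold JHC
  rw [List.splitBy_of_isChain (by simp)]
  · simp [List.replicate_succ]
  · exact List.isChain_replicate_of_rel _ (by simp)

theorem JHC_run (m b : ℕ) {t : List ℕ} (h : t.head? ≠ some b) :
    JHC (List.replicate (m + 1) b ++ t) = (m + 1) :: b :: JHC t := by
  rw [JHC_append, JHC_replicate]
  · rfl
  · simpa [List.replicate_succ'] using h

/-- Every nonempty list starts with a maximal run. -/
theorem exists_run {α : Type*} (b : α) (x : List α) :
    ∃ m t, b :: x = List.replicate (m + 1) b ++ t ∧ t.head? ≠ some b := by
  classical
  induction x with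
  | nil => exact ⟨0, [], by simp, by simp⟩
  | cons a x ih =>
    by_cases hab : a = b
    · subst hab
      obtain ⟨m, t, h, ht⟩ := ih
      exact ⟨m + 1, t, by rw [List.replicate_succ, List.cons_append, ← h], ht⟩
    · exact ⟨0, a :: x, by simp, by simpa using hab⟩

theorem exists_JHC_cons (b : ℕ) (x : List ℕ) : ∃ m t, JHC (b :: x) = (m + 1) :: b :: t := by
  obtain ⟨m, t, h, ht⟩ := exists_run b x
  exact ⟨m, JHC t, by rw [h, JHC_run m b ht]⟩

theorem JHC_cons_ne (b : ℕ) {x : List ℕ} (h : x.head? ≠ some b) :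
    JHC (b :: x) = 1 :: b :: JHC x :=
  JHC_run 0 b h

theorem JHC_cons_eq {b m : ℕ} {x t : List ℕ} (h : JHC (b :: x) = m :: b :: t) :
    JHC (b :: b :: x) = (m + 1) :: b :: t := by
  obtain ⟨k, s, hs, hs'⟩ := exists_run b x
  rw [hs, JHC_run k b hs'] at h
  have : b :: b :: x = List.replicate (k + 1 + 1) b ++ s := by
    rw [List.replicate_succ, List.cons_append, ← hs]
  rw [this, JHC_run _ b hs']
  simp_all

theorem JHC_ne_nil {x : List ℕ} (h : x ≠ []) : JHC x ≠ [] := by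
  obtain ⟨b, y, rfl⟩ := List.exists_cons_of_ne_nil h
  obtain ⟨m, t, h⟩ := exists_JHC_cons b y
  simp [h]

/-- Induction along the decomposition into maximal runs. -/
theorem run_induction {α : Type*} {P : List α → Prop} (nil : P [])
    (run : ∀ m b t, t.head? ≠ some b → P t → P (List.replicate (m + 1) b ++ t)) (x : List α) :
    P x := by
  induction hn : x.length using Nat.strong_induction_on generalizing x with
  | _ n ih =>
    cases x with
    | nil => exact nil
    | cons b x =>
      obtain ⟨m, t, h, ht⟩ := exists_run b x
      rw [h] at hn ⊢
      refine run m b t ht (ih t.length ?_ t rfl)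
      simp at hn
      omega

theorem getLast?_JHC (x : List ℕ) : (JHC x).getLast? = x.getLast? := by
  induction x using run_induction with
  | nil => simp [JHC_nil]
  | run m b t ht ih =>
    rw [JHC_run m b ht]
    rcases List.eq_nil_or_concat t with rfl | ⟨t', c, rfl⟩
    · simp [JHC_nil, List.replicate_succ']
    · have : (m + 1) :: b :: JHC (t'.concat c) = [m + 1, b] ++ JHC (t'.concat c) := rfl
      rw [this, List.getLast?_append, List.getLast?_append, ih]
      simp

theorem JHC_iter_nil (n : ℕ) : JHC^[n] [] = [] := Function.iterate_fixed JHC_nil n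

theorem getLast?_JHC_iter (n : ℕ) (x : List ℕ) : (JHC^[n] x).getLast? = x.getLast? := by
  induction n with
  | zero => rfl
  | succ n ih => rw [Function.iterate_succ_apply', getLast?_JHC, ih]

/-- Two adjacent runs of the same letter merge, so the output is shorter. -/
theorem JHC_append_ne {L R : List ℕ} {d : ℕ} (hL : L.getLast? = some d) (hR : R.head? = some d) :
    JHC (L ++ R) ≠ JHC L ++ JHC R := by
  suffices h : (JHC (L ++ R)).length < (JHC L ++ JHC R).length from fun h' => by simp [h'] at h
  obtain ⟨R', rfl⟩ : ∃ R', R = d :: R' := by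
    cases R <;> simp_all
  induction L with
  | nil => simp at hL
  | cons b L ih =>
    cases L with
    | nil =>
      obtain rfl : b = d := by simpa using hL
      obtain ⟨m, t, h⟩ := exists_JHC_cons b R'
      rw [List.singleton_append, JHC_cons_eq h, h, JHC_cons_ne b (by simp), JHC_nil]
      simp
    | cons c L =>
      have ih := ih (by simpa using hL)
      by_cases hbc : b = c
      · subst hbc
        obtain ⟨m, t, h⟩ := exists_JHC_cons b L
        obtain ⟨m', t', h'⟩ := exists_JHC_cons b (L ++ d :: R')
        rw [JHC_cons_eq h]
        simp only [List.cons_append] at ih ⊢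
        rw [JHC_cons_eq h']
        rw [h, h'] at ih
        simpa using ih
      · simp only [List.cons_append] at ih ⊢
        rw [JHC_cons_ne b (by simpa using Ne.symm hbc), JHC_cons_ne b (by simpa using Ne.symm hbc)]
        simpa using ih

/-! ### Permanent splittings -/

/-- `L` and `R` never interact when juxtaposed; this is the splitting `L.R`, with either side
possibly empty. -/
def Splits (L R : List ℕ) : Prop := ∀ n : ℕ, JHC^[n] (L ++ R) = JHC^[n] L ++ JHC^[n] R

/-- No descendant of `r` starts with `d`. Since the last letter of a string never changes, this is
what is needed for `r` to split off from anything that ends in `d`. -/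
def Sep (d : ℕ) (r : List ℕ) : Prop := ∀ n : ℕ, (JHC^[n] r).head? ≠ some d

theorem Sep.nil (d : ℕ) : Sep d [] := fun n => by simp [JHC_iter_nil]

theorem Sep.next {d : ℕ} {r : List ℕ} (h : Sep d r) : Sep d (JHC r) := fun n => by
  simpa only [Function.iterate_succ_apply] using h (n + 1)

theorem splits_of_sep {L R : List ℕ} (h : ∀ d ∈ L.getLast?, Sep d R) : Splits L R := by
  intro n
  induction n generalizing L R with
  | zero => rfl
  | succ n ih =>
    simp only [Function.iterate_succ_apply]
    have h0 : ∀ d ∈ L.getLast?, R.head? ≠ some d := fun d hd => h d hd 0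
    rw [JHC_append h0]
    exact ih fun d hd => (h d (by rwa [getLast?_JHC] at hd)).next

theorem not_splits {L R : List ℕ} {d k : ℕ} (hL : L.getLast? = some d)
    (hR : (JHC^[k] R).head? = some d) : ¬ Splits L R := fun h => by
  have h1 := h (k + 1)
  simp only [Function.iterate_succ_apply', h k] at h1
  exact JHC_append_ne (by rw [getLast?_JHC_iter, hL]) hR h1

theorem JHC_iter_ne_nil {x : List ℕ} (h : x ≠ []) (n : ℕ) : JHC^[n] x ≠ [] := by
  induction n generalizing x with
  | zero => exact h
  | succ n ih => exact ih (JHC_ne_nil h)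

theorem Sep.append {e : ℕ} {p q : List ℕ} (hp : p ≠ []) (h : Sep e p) (hs : Splits p q) :
    Sep e (p ++ q) := fun n => by
  rw [hs n, List.head?_append_of_ne_nil _ (JHC_iter_ne_nil hp n)]
  exact h n

theorem head?_JHC_eq_three {t : List ℕ} (h : (JHC t).head? = some 3) :
    ∃ x t', t = x :: x :: x :: t' := by
  cases t with
  | nil => simp [JHC_nil] at h
  | cons b x =>
    obtain ⟨m, t, hrun, ht⟩ := exists_run b x
    rw [hrun, JHC_run m b ht] at h
    obtain rfl : m = 2 := by simpa using h
    exact ⟨b, t, hrun⟩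

/-- One of the three starts `1x` with `x ≠ 1`, `111`, `3` of a string none of whose descendants
starts with `2`; each of them leads to the next one, cyclically. -/
def NoTwo (s : List ℕ) : Prop :=
  (∃ x t, s = 1 :: x :: t ∧ x ≠ 1 ∧ t.head? ≠ some x) ∨
  (∃ t, s = 1 :: 1 :: 1 :: t ∧ t.head? ≠ some 1) ∨
  (∃ t, s = 3 :: t ∧ t.head? ≠ some 3 ∧ (JHC t).head? ≠ some 3)

theorem NoTwo.next {s : List ℕ} (h : NoTwo s) : NoTwo (JHC s) := by
  rcases h with ⟨x, t, rfl, hx, ht⟩ | ⟨t, rfl, ht⟩ | ⟨t, rfl, ht, ht'⟩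
  · rw [JHC_cons_ne 1 (by simpa using hx), JHC_cons_ne x ht]
    exact Or.inr (Or.inl ⟨_, rfl, by simpa using hx⟩)
  · have := JHC_run 2 1 ht
    rw [show 1 :: 1 :: 1 :: t = List.replicate 3 1 ++ t from rfl, this]
    refine Or.inr (Or.inr ⟨_, rfl, by simp, fun h => ?_⟩)
    obtain ⟨x, t', h⟩ := head?_JHC_eq_three h
    obtain ⟨rfl, h⟩ := List.cons.inj h
    cases t with
    | nil => simp [JHC_nil] at h
    | cons c t =>
      obtain ⟨m, u, hu⟩ := exists_JHC_cons c t
      rw [hu] at h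
      simp_all
  · rw [JHC_cons_ne 3 ht]
    exact Or.inl ⟨3, _, rfl, by simp, ht'⟩

theorem NoTwo.sep {s : List ℕ} (h : NoTwo s) : Sep 2 s := fun n => by
  induction n generalizing s with
  | zero => rcases h with ⟨x, t, rfl, _⟩ | ⟨t, rfl, _⟩ | ⟨t, rfl, _⟩ <;> simp
  | succ n ih => exact ih h.next

theorem sep_two_two {d : ℕ} (hd : d ≠ 2) : Sep d [2, 2] := fun n => by
  have h : JHC [2, 2] = [2, 2] := JHC_replicate 1 2
  rw [Function.iterate_fixed h n]
  simpa using hd.symm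

/-! ### Letters, and the 92 + 2 elements -/

/-- The letters occurring in the calculations: `1`, `2`, `3`, and one symbolic letter standing for
an unspecified integer `n ≥ 4`. -/
inductive Lt
  | one | two | three | big
  deriving DecidableEq

open Lt

namespace Lt

/-- Numbering of the letters, used for coding. -/
def idx : Lt → ℕ
  | one => 0
  | two => 1
  | three => 2
  | big => 3

/-- Equality test that evaluates cheaply in the kernel. -/
def beq : Lt → Lt → Bool
  | one, one => true
  | two, two => true
  | three, three => true
  | big, big => true
  | _, _ => false

theorem beq_iff {a b : Lt} : a.beq b = true ↔ a = b := by
  cases a <;> cases b <;> decide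

theorem beq_false_iff {a b : Lt} : a.beq b = false ↔ a ≠ b := by
  cases a <;> cases b <;> decide

/-- The integer denoted by a letter, where `big` denotes `n`. -/
def val (n : ℕ) : Lt → ℕ
  | one => 1
  | two => 2
  | three => 3
  | big => n

theorem val_inj {n : ℕ} (hn : 4 ≤ n) {a b : Lt} : a.val n = b.val n ↔ a = b := by
  cases a <;> cases b <;> simp [val] <;> omega

theorem val_pos {n : ℕ} (hn : 4 ≤ n) (a : Lt) : 0 < a.val n := by
  cases a <;> simp [val]
  omega

end Lt

/-- The string of integers denoted by a word. -/
def Val (n : ℕ) (x : List Lt) : List ℕ := x.map (Lt.val n)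

@[simp] theorem Val_nil (n : ℕ) : Val n [] = [] := rfl
@[simp] theorem Val_cons (n : ℕ) (a : Lt) (x : List Lt) : Val n (a :: x) = a.val n :: Val n x := rfl
@[simp] theorem Val_append (n : ℕ) (x y : List Lt) : Val n (x ++ y) = Val n x ++ Val n y := by
  simp [Val]
@[simp] theorem Val_eq_nil {n : ℕ} {x : List Lt} : Val n x = [] ↔ x = [] := by simp [Val]

theorem Val_congr {x : List Lt} (h : big ∉ x) (m n : ℕ) : Val m x = Val n x := by
  refine List.map_congr_left fun a ha => ?_
  cases a <;> first | rfl | exact absurd ha h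

/-- The word whose letters are the decimal digits of `n`, followed by `acc`. The first argument
bounds the number of digits. -/
def decode : ℕ → ℕ → List Lt → List Lt
  | 0, _, acc => acc
  | k + 1, n, acc =>
    match n with
    | 0 => acc
    | n + 1 => decode k ((n + 1) / 10)
        ((match (n + 1) % 10 with | 1 => one | 2 => two | 3 => three | _ => big) :: acc)

/-- Conway's 92 elements, from hydrogen to uranium. -/
def elements : List (List Lt) :=
  List.map (fun n => decode 50 n [])
    [22, 13112221133211322112211213322112, 312211322212221121123222112,
     111312211312113221133211322112211213322112, 1321132122211322212221121123222112,
     3113112211322112211213322112, 111312212221121123222112, 132112211213322112, 31121123222112,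
     111213322112, 123222112, 3113322112, 1113222112, 1322112, 311311222112, 1113122112, 132112,
     3112, 1112, 12, 3113112221133112, 11131221131112, 13211312, 31132, 111311222112, 13122112,
     32112, 11133112, 131112, 312, 13221133122211332, 31131122211311122113222,
     11131221131211322113322112, 13211321222113222112, 3113112211322112, 11131221222112, 1321122112,
     3112112, 1112133, 12322211331222113112211, 1113122113322113111221131221, 13211322211312113211,
     311322113212221, 132211331222113112211, 311311222113111221131221, 111312211312113211,
     132113212221, 3113112211, 11131221, 13211, 3112221, 1322113312211, 311311222113111221,
     11131221131211, 13211321, 311311, 11131, 1321133112, 31131112, 111312, 132, 311332, 1113222,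
     13221133112, 3113112221131112, 111312211312, 1321132, 311311222, 11131221133112, 1321131112,
     311312, 11132, 13112221133211322112211213322113, 312211322212221121123222113,
     111312211312113221133211322112211213322113, 1321132122211322212221121123222113,
     3113112211322112211213322113, 111312212221121123222113, 132112211213322113, 31121123222113,
     111213322113, 123222113, 3113322113, 1113222113, 1322113, 311311222113, 1113122113, 132113,
     3113, 1113, 13, 3]

/-- The prefix of the isotopes of plutonium. -/
def pu : List Lt := decode 50 1311222113321132211221121332211 []

/-- The prefix of the isotopes of neptunium. -/
def np : List Lt := decode 50 31221132221222112112322211 []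

/-- The common elements together with the two families of transuranic ones. -/
def allElements : List (List Lt) := (pu ++ [big]) :: (np ++ [big]) :: elements

/-- The finite part of the system. -/
def sysS : Finset (List ℕ) := (elements.map (Val 4)).toFinset

/-- Membership in the system consisting of the 92 elements and the two transuranic families. -/
def InS (A : List ℕ) : Prop := InSystem sysS (Val 4 pu) (Val 4 np) A

theorem big_notMem : (∀ p ∈ elements, big ∉ p) ∧ big ∉ pu ∧ big ∉ np := by decide +kernel

theorem inS_iff {A : List ℕ} : InS A ↔ ∃ n p, 4 ≤ n ∧ p ∈ allElements ∧ A = Val n p := by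
  obtain ⟨h1, h2, h3⟩ := big_notMem
  constructor
  · rintro (h | ⟨n, hn, rfl | rfl⟩)
    · obtain ⟨p, hp, rfl⟩ := List.mem_map.1 (List.mem_toFinset.1 h)
      exact ⟨4, p, le_rfl, by simp [allElements, hp], rfl⟩
    · exact ⟨n, pu ++ [big], hn, by simp [allElements], by
        rw [Val_append, Val_congr h2 n 4]; rfl⟩
    · exact ⟨n, np ++ [big], hn, by simp [allElements], by
        rw [Val_append, Val_congr h3 n 4]; rfl⟩
  · rintro ⟨n, p, hn, hp, rfl⟩
    simp only [allElements, List.mem_cons] at hp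
    rcases hp with rfl | rfl | hp
    · exact Or.inr ⟨n, hn, Or.inl (by rw [Val_append, Val_congr h2 n 4]; rfl)⟩
    · exact Or.inr ⟨n, hn, Or.inr (by rw [Val_append, Val_congr h3 n 4]; rfl)⟩
    · exact Or.inl (List.mem_toFinset.2 (List.mem_map.2 ⟨p, hp, Val_congr (h1 p hp) 4 n⟩))

/-! ### The elements are atoms -/

/-- One step of look-and-say on words: the output for `b :: x` from the output for `x`. The value
`none` signals a run of length at least four. -/
def sayL (b : Lt) : List Lt → Option (List Lt)
  | m :: a :: t =>
    bif a.beq b then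
      match m with
      | one => some (two :: a :: t)
      | two => some (three :: a :: t)
      | _ => none
    else some (one :: b :: m :: a :: t)
  | [] => some [one, b]
  | _ => none

/-- Look-and-say on words. -/
def jhcL (x : List Lt) : Option (List Lt) :=
  x.rec (some []) fun b _ y => y.bind (sayL b)

theorem JHC_Val {n : ℕ} (hn : 4 ≤ n) {x y : List Lt} (h : jhcL x = some y) :
    JHC (Val n x) = Val n y := by
  induction x generalizing y with
  | nil =>
    obtain rfl : [] = y := by simpa [jhcL] using h
    exact JHC_nil
  | cons b x ih =>
    obtain ⟨y', h1, h2⟩ := Option.bind_eq_some_iff.1 h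
    have ih := ih h1
    cases x with
    | nil =>
      obtain rfl : [] = y' := by simpa [jhcL] using h1
      obtain rfl : [one, b] = y := by simpa [sayL] using h2
      exact JHC_replicate 0 _
    | cons a x =>
      obtain ⟨m, t, hmt⟩ := exists_JHC_cons (a.val n) (Val n x)
      rw [Val_cons, hmt] at ih
      match y', ih with
      | m' :: a' :: t', ih =>
        simp only [Val_cons, List.cons.injEq] at ih
        obtain ⟨hm, ha, ht⟩ := ih
        obtain rfl := (val_inj hn).1 ha
        cases hab : a.beq b with
        | true =>
          obtain rfl := beq_iff.1 hab
          simp only [sayL, hab, cond_true] at h2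
          have := JHC_cons_eq hmt
          simp only [Val_cons, this, ht]
          cases m' <;> simp_all [val] <;> subst h2 <;> simp [val]
        | false =>
          have hne := beq_false_iff.1 hab
          simp only [sayL, hab, cond_false, Option.some.injEq] at h2
          subst h2
          rw [Val_cons, JHC_cons_ne _ (by simpa [val_inj hn] using hne), Val_cons, hmt]
          simp_all [val]

/-- A test whether `r` or one of its next `k - 1` descendants starts with `d`; it gives up at runs
of length at least four. -/
def clash : ℕ → Lt → List Lt → Bool
  | 0, _, _ => false
  | _, _, [] => false
  | k + 1, d, a :: r =>
    bif a.beq d then true else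
      match jhcL (a :: r) with
      | some r' => clash k d r'
      | none => false

theorem exists_head_of_clash {n : ℕ} (hn : 4 ≤ n) {k : ℕ} {d : Lt} {r : List Lt}
    (h : clash k d r = true) : ∃ j, (JHC^[j] (Val n r)).head? = some (d.val n) := by
  induction k generalizing r with
  | zero => simp [clash] at h
  | succ k ih =>
    cases r with
    | nil => simp [clash] at h
    | cons a r =>
      rw [clash] at h
      cases hab : a.beq d with
      | true => exact ⟨0, by simp [beq_iff.1 hab]⟩
      | false =>
        rw [hab, cond_false] at h
        cases hr : jhcL (a :: r) with
        | none => simp [hr] at h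
        | some r' =>
          rw [hr] at h
          obtain ⟨j, hj⟩ := ih h
          exact ⟨j + 1, by rwa [Function.iterate_succ_apply, JHC_Val hn hr]⟩

/-- At every cut of the word, the two sides interact within eight days. -/
def irred : List Lt → Bool
  | a :: b :: t => clash 9 a (b :: t) && irred (b :: t)
  | _ => true

theorem clash_of_irred {l r : List Lt} {d : Lt} (h : irred (l ++ r) = true)
    (hd : l.getLast? = some d) (hr : r ≠ []) : clash 9 d r = true := by
  induction l with
  | nil => simp at hd
  | cons a l ih =>
    cases l with
    | nil =>
      obtain ⟨b, r, rfl⟩ := List.exists_cons_of_ne_nil hr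
      obtain rfl : a = d := by simpa using hd
      simp only [List.cons_append, List.nil_append, irred, Bool.and_eq_true] at h
      exact h.1
    | cons b l =>
      simp only [List.cons_append, irred, Bool.and_eq_true] at h
      exact ih h.2 (by simpa using hd)

theorem irred_all : ∀ p ∈ allElements, p ≠ [] ∧ irred p = true := by decide +kernel

theorem InS.isAtom {A : List ℕ} (h : InS A) : IsAtomString A := by
  obtain ⟨n, p, hn, hp, rfl⟩ := inS_iff.1 h
  obtain ⟨hne, hirr⟩ := irred_all p hp
  refine ⟨⟨by simpa using hne, fun x hx => ?_⟩, ?_⟩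
  · obtain ⟨a, -, rfl⟩ := List.mem_map.1 hx
    exact val_pos hn a
  · rintro L R ⟨hLR, hL, hR, hs⟩
    obtain ⟨l, r, rfl, rfl, rfl⟩ := List.map_eq_append_iff.1 hLR
    have hl : l ≠ [] := by simpa using hL
    have hd := List.getLast?_eq_getLast_of_ne_nil hl
    obtain ⟨j, hj⟩ := exists_head_of_clash hn (clash_of_irred hirr hd (by simpa using hR))
    refine not_splits (L := Val n l) (d := (l.getLast hl).val n) (k := j) ?_ hj (fun k => ?_)
    · rw [Val, List.getLast?_map, hd]; rfl
    · have := hs k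
      rwa [hLR] at this

/-! ### Strings whose descendants consist of elements -/

/-- After `k` days `s` is a split compound of members of the system. -/
def Good (k : ℕ) (s : List ℕ) : Prop :=
  ∃ As : List (List ℕ), SplitCompound (JHC^[k] s) As ∧ ∀ A ∈ As, InS A

theorem Good.nil (k : ℕ) : Good k [] :=
  ⟨[], by simp [SplitCompound, JHC_iter_nil], by simp⟩

theorem InS.good {A : List ℕ} (h : InS A) : Good 0 A :=
  ⟨[A], by simpa [SplitCompound] using h.isAtom, by simpa using h⟩

theorem good_succ {k : ℕ} {s : List ℕ} : Good (k + 1) s ↔ Good k (JHC s) := Iff.rfl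

theorem Good.append {k : ℕ} {s t : List ℕ} (hs : Good k s) (ht : Good k t) (h : Splits s t) :
    Good k (s ++ t) := by
  obtain ⟨As, ⟨hA, hAf, hAn⟩, hAmem⟩ := hs
  obtain ⟨Bs, ⟨hB, hBf, hBn⟩, hBmem⟩ := ht
  refine ⟨As ++ Bs, ⟨fun C hC => ?_, ?_, fun n => ?_⟩, fun C hC => ?_⟩
  · exact (List.mem_append.1 hC).elim (hA C) (hB C)
  · rw [h k, List.flatten_append, ← hAf, ← hBf]
  · rw [List.map_append, List.flatten_append, ← hAn, ← hBn]
    simp only [← Function.iterate_add_apply]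
    exact h (n + k)
  · exact (List.mem_append.1 hC).elim (hAmem C) (hBmem C)

/-! ### Where to cut -/

/-- The start of a word `p` tells that no descendant of `p` begins with `2`. Only the first four
letters matter. -/
def noTwo : List Lt → Bool
  | [three] => true
  | three :: x :: y :: z :: _ => !x.beq three && !(x.beq y && y.beq z)
  | three :: x :: _ => !x.beq three
  | one :: one :: one :: x :: _ => !x.beq one
  | [one, one, one] => true
  | one :: one :: _ => false
  | one :: x :: y :: _ => !x.beq y
  | [one, _] => true
  | _ => false

/-- A sufficient criterion for a letter `e` in front of a word `p` to split off from it, as a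
function of the first four letters of `p`. -/
def cuts : Lt → List Lt → Bool
  | two, p => noTwo p
  | _, [two, two] => true
  | _, _ => false

theorem noTwo_Val {n : ℕ} (hn : 4 ≤ n) {p : List Lt} (h : noTwo (p.take 4) = true) :
    NoTwo (Val n p) := by
  have hthree : ∀ {a : Lt}, a.val n = 3 ↔ a = three := fun {a} => val_inj hn (b := three)
  have hone : ∀ {a : Lt}, a.val n = 1 ↔ a = one := fun {a} => val_inj hn (b := one)
  -- a leading `3` needs that no `3` and no run of length three comes next
  have h3 : ∀ t : List Lt, t.head? ≠ some three → (∀ x t', t ≠ x :: x :: x :: t') →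
      NoTwo (Val n (three :: t)) := by
    refine fun t h1 h2 => Or.inr (Or.inr ⟨Val n t, rfl, ?_, fun h => ?_⟩)
    · cases t <;> simp_all
    · obtain ⟨x, t', hx⟩ := head?_JHC_eq_three h
      rcases t with _ | ⟨a, _ | ⟨b, _ | ⟨c, t⟩⟩⟩
      · simp at hx
      · simp at hx
      · simp at hx
      · simp only [Val_cons, List.cons.injEq] at hx
        obtain ⟨rfl, hb, hc, -⟩ := hx
        obtain rfl := (val_inj hn).1 hb
        obtain rfl := (val_inj hn).1 hc
        exact h2 _ _ rfl
  have h1 : ∀ (x : Lt) (t : List Lt), x ≠ one → t.head? ≠ some x →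
      NoTwo (Val n (one :: x :: t)) := by
    refine fun x t h1 h2 => Or.inl ⟨_, _, rfl, by simpa [hone] using h1, ?_⟩
    cases t <;> simp_all [val_inj hn]
  have h111 : ∀ t : List Lt, t.head? ≠ some one → NoTwo (Val n (one :: one :: one :: t)) := by
    refine fun t h1 => Or.inr (Or.inl ⟨_, rfl, ?_⟩)
    cases t <;> simp_all
  match p, h with
  | [three], _ => exact h3 [] (by simp) (by simp)
  | [three, x], h => exact h3 [x] (by simpa [noTwo, beq_false_iff] using h) (by simp)
  | [three, x, y], h => exact h3 [x, y] (by simpa [noTwo, beq_false_iff] using h) (by simp)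
  | three :: x :: y :: z :: t, h =>
    simp only [List.take_succ_cons, List.take_zero, noTwo, Bool.and_eq_true, Bool.not_eq_true',
      Bool.and_eq_false_iff, beq_false_iff] at h
    refine h3 _ (by simpa using h.1) (fun a t' ht => ?_)
    simp_all
  | one :: one :: one :: t, h =>
    refine h111 t ?_
    cases t <;> simp_all [noTwo, beq_false_iff]
  | [one, two], _ => exact h1 _ _ (by simp) (by simp)
  | [one, three], _ => exact h1 _ _ (by simp) (by simp)
  | [one, big], _ => exact h1 _ _ (by simp) (by simp)
  | one :: two :: y :: t, h =>
    have hy : beq two y = false := by cases t <;> simpa [noTwo] using h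
    exact h1 _ _ (by simp) (by simpa using (beq_false_iff.1 hy).symm)
  | one :: three :: y :: t, h =>
    have hy : beq three y = false := by cases t <;> simpa [noTwo] using h
    exact h1 _ _ (by simp) (by simpa using (beq_false_iff.1 hy).symm)
  | one :: big :: y :: t, h =>
    have hy : beq big y = false := by cases t <;> simpa [noTwo] using h
    exact h1 _ _ (by simp) (by simpa using (beq_false_iff.1 hy).symm)
  | [one, one], h => simp [noTwo] at h
  | [one, one, two], h => simp [noTwo] at h
  | [one, one, three], h => simp [noTwo] at h
  | [one, one, big], h => simp [noTwo] at h
  | one :: one :: two :: _ :: _, h => simp [noTwo] at h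
  | one :: one :: three :: _ :: _, h => simp [noTwo] at h
  | one :: one :: big :: _ :: _, h => simp [noTwo] at h

theorem sep_of_cuts {n : ℕ} (hn : 4 ≤ n) {e : Lt} {p : List Lt} (h : cuts e (p.take 4) = true) :
    p ≠ [] ∧ Sep (e.val n) (Val n p) := by
  refine ⟨?_, ?_⟩
  · rintro rfl
    cases e <;> simp [cuts, noTwo] at h
  · by_cases he : e = two
    · subst he
      exact (noTwo_Val hn h).sep
    · have hp : p.take 4 = [two, two] := by
        revert h
        generalize p.take 4 = c
        unfold cuts
        split <;> simp_all
      obtain rfl : p = [two, two] := by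
        match p, hp with
        | [a, b], hp => simpa using hp
      exact sep_two_two fun h => he ((val_inj hn (b := two)).1 h)

/-! ### The cascade -/

/-- The state reached by a transducer that reads a word `x` from right to left and produces its
descendants for a number of days on the fly. At a positive level, `lv a m c r` says that the
current run consists of `m` letters `a`, and that the piece of the next day's word which is under
construction starts with `c` (its first four letters) and has brought the next level to state `r`;
pieces which are separated from the rest by a permanent splitting have been dealt with.
At the bottom level the piece itself is recorded by `top`.
The state `bad` signals failure. -/
inductive St
  | bad
  | nil
  | top (p : List Lt)
  | lv (a m : Lt) (c : List Lt) (r : St)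

open St

/-- Pass `s` to `k` in evaluated form, unless it is `bad`. -/
def St.force {α : Type} (fail : α) (s : St) (k : St → α) : α :=
  match s with
  | bad => fail
  | nil => k nil
  | top p => k (top p)
  | lv a m c r => k (lv a m c r)

theorem force_eq {α : Type} (fail : α) (s : St) (k : St → α) :
    s.force fail k = fail ∨ s.force fail k = k s := by
  cases s <;> simp [St.force]

/-- Pass the first four letters of `e :: c` to `k`. -/
def trim {α : Type} (e : Lt) (c : List Lt) (k : List Lt → α) : α :=
  match c with
  | x :: y :: z :: _ => k [e, x, y, z]
  | c => k (e :: c)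

theorem trim_eq {α : Type} (e : Lt) (p : List Lt) (k : List Lt → α) :
    trim e (p.take 4) k = k ((e :: p).take 4) := by
  match p with
  | [] => rfl
  | [_] => rfl
  | [_, _] => rfl
  | [_, _, _] => rfl
  | _ :: _ :: _ :: _ :: _ => rfl

/-- A transducer: `feed s b` reads the letter `b`, and `fin s` tells whether the word read so far
is good if nothing follows. -/
structure Mach where
  feed : St → Lt → St
  fin : St → Bool

/-- Put the letter `e` in front of the piece with start `c` and state `r`; if a permanent splitting
occurs there, check that this piece is good and begin a new one. -/
def emit {α : Type} (fail : α) (M : Mach) (c : List Lt) (r : St) (e : Lt)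
    (k : List Lt → St → α) : α :=
  bif cuts e c then
    bif M.fin r then (M.feed nil e).force fail fun r₁ => k [e] r₁ else fail
  else (M.feed r e).force fail fun r₁ => trim e c fun c₁ => k c₁ r₁

/-- Test for being an element. -/
def memElements (p : List Lt) : Bool := decide (p ∈ allElements)

/-- The transducer for day zero just records the word, and compares it with the elements. -/
def mach0 : Mach where
  feed s b :=
    match s with
    | nil => top [b]
    | top p => top (b :: p)
    | _ => bad
  fin s :=
    match s with
    | nil => true
    | top p => memElements p
    | _ => false

/-- One more day in front of the transducer `M`. -/
def machS (M : Mach) : Mach where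
  feed s b :=
    match s with
    | nil => lv b one [] nil
    | lv a m c r =>
      bif a.beq b then
        match m with
        | one => lv a two c r
        | two => lv a three c r
        | _ => bad
      else emit bad M c r a fun c r => emit bad M c r m fun c r => lv b one c r
    | _ => bad
  fin s :=
    match s with
    | nil => true
    | lv a m c r => emit false M c r a fun c r => emit false M c r m fun _ r => M.fin r
    | _ => false

/-- The transducer for `k` days. -/
def mach (k : ℕ) : Mach := k.rec mach0 fun _ M => machS M

section Soundness

variable (n : ℕ)

/-- The string `y` consists of a piece `p` under construction, with start `c` and satisfying
`P p r`, followed by a part `q` that is separated from it and good. -/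
def Pieces (P : List Lt → St → Prop) (k : ℕ) (y : List ℕ) (c : List Lt) (r : St) : Prop :=
  ∃ p q, y = Val n p ++ q ∧ c = p.take 4 ∧ P p r ∧ Good k q ∧
    (∀ d ∈ (Val n p).getLast?, Sep d q) ∧ (p = [] → q = [])

/-- Meaning of the states of `mach k`: the state `s` describes the word `x`. -/
def Rel : ℕ → List Lt → St → Prop
  | _, _, bad => True
  | _, x, nil => x = []
  | 0, x, top p => x = p
  | k + 1, x, lv a m c r => ∃ x' y, x = a :: x' ∧ JHC (Val n x) = m.val n :: a.val n :: y ∧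
      Pieces n (Rel k) k y c r
  | _, _, _ => False

/-- Soundness of a transducer with respect to the meaning of its states. -/
structure Sound (M : Mach) (k : ℕ) : Prop where
  feed : ∀ x s b, Rel n k x s → Rel n k (b :: x) (M.feed s b)
  fin : ∀ x s, Rel n k x s → M.fin s = true → Good k (Val n x)

variable {n}

theorem Rel.nil (k : ℕ) : Rel n k [] nil := by cases k <;> simp [Rel]

theorem Pieces.good {M : Mach} {k : ℕ} (hM : Sound n M k) {y : List ℕ} {c : List Lt} {r : St}
    (h : Pieces n (Rel n k) k y c r) (hr : M.fin r = true) : Good k y := by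
  obtain ⟨p, q, rfl, -, hp, hq, hs, -⟩ := h
  exact (hM.fin p r hp hr).append hq (splits_of_sep hs)

theorem emit_spec (hn : 4 ≤ n) {α : Type} {fail : α} {M : Mach} {k : ℕ} (hM : Sound n M k)
    {y : List ℕ} {c : List Lt} {r : St} (h : Pieces n (Rel n k) k y c r) (e : Lt)
    (K : List Lt → St → α) :
    emit fail M c r e K = fail ∨
      ∃ c' r', Pieces n (Rel n k) k (e.val n :: y) c' r' ∧ emit fail M c r e K = K c' r' := by
  unfold emit
  cases hc : cuts e c with
  | true =>
    cases hr : M.fin r with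
    | false => exact Or.inl rfl
    | true =>
      refine (force_eq fail (M.feed nil e) (fun r' => K [e] r')).imp id fun h' =>
        ⟨_, _, ?_, h'⟩
      have hy := h.good hM hr
      obtain ⟨p, q, rfl, rfl, hp, hq, hs, -⟩ := h
      obtain ⟨hpne, hsep⟩ := sep_of_cuts hn hc
      refine ⟨[e], _, rfl, rfl, hM.feed _ _ _ (Rel.nil k), hy, ?_, by simp⟩
      have := hsep.append (by simpa using hpne) (splits_of_sep hs)
      simpa using this
  | false =>
    refine (force_eq fail (M.feed r e) (fun r' => trim e c fun c' => K c' r')).imp id fun h' => ?_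
    obtain ⟨p, q, rfl, rfl, hp, hq, hs, hpq⟩ := h
    rw [trim_eq] at h'
    refine ⟨_, _, ⟨e :: p, q, rfl, rfl, hM.feed _ _ _ hp, hq, ?_, by simp⟩, h'⟩
    by_cases hp : p = []
    · rw [hpq hp]
      exact fun d _ => Sep.nil d
    · obtain ⟨a, p, rfl⟩ := List.exists_cons_of_ne_nil hp
      simpa using hs

theorem sound_mach0 (hn : 4 ≤ n) : Sound n mach0 0 where
  feed x s b h := by
    cases s <;> simp_all [Rel, mach0]
  fin x s h hs := by
    cases s with
    | nil =>
      obtain rfl : x = [] := h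
      exact Good.nil 0
    | top p =>
      obtain rfl : x = p := h
      exact (inS_iff.2 ⟨n, x, hn, of_decide_eq_true hs, rfl⟩).good
    | bad => simp [mach0] at hs
    | lv a m c r => simp [mach0] at hs

theorem sound_machS (hn : 4 ≤ n) {M : Mach} {k : ℕ} (hM : Sound n M k) :
    Sound n (machS M) (k + 1) where
  feed x s b h := by
    cases s with
    | bad => simp [machS, Rel]
    | top p => simp [machS, Rel]
    | nil =>
      obtain rfl : x = [] := h
      exact ⟨[], [], rfl, JHC_replicate 0 _,
        [], [], rfl, rfl, Rel.nil k, Good.nil k, fun d _ => Sep.nil d, fun _ => rfl⟩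
    | lv a m c r =>
      obtain ⟨x', y, rfl, hy, hP⟩ := h
      simp only [machS]
      cases hab : a.beq b with
      | true =>
        obtain rfl := beq_iff.1 hab
        have := JHC_cons_eq hy
        cases m with
        | one => exact ⟨_, _, rfl, this, hP⟩
        | two => exact ⟨_, _, rfl, this, hP⟩
        | three => simp [Rel]
        | big => simp [Rel]
      | false =>
        have hne := beq_false_iff.1 hab
        rw [cond_false]
        rcases emit_spec hn hM hP a fun c r => emit bad M c r m fun c r => lv b one c r with
          h | ⟨c', r', hP', h⟩
        · rw [h]; simp [Rel]
        rw [h]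
        rcases emit_spec hn hM hP' m fun c r => lv b one c r with h | ⟨c', r', hP', h⟩
        · rw [h]; simp [Rel]
        rw [h]
        refine ⟨_, _, rfl, ?_, hP'⟩
        rw [Val_cons, JHC_cons_ne _ (by simpa [val_inj hn] using hne), hy]
        rfl
  fin x s h hs := by
    cases s with
    | bad => simp [machS] at hs
    | top p => simp [machS] at hs
    | nil =>
      obtain rfl : x = [] := h
      exact Good.nil _
    | lv a m c r =>
      obtain ⟨x', y, rfl, hy, hP⟩ := h
      simp only [machS] at hs
      rw [good_succ, hy]
      rcases emit_spec hn hM hP a fun c r => emit false M c r m fun _ r => M.fin r with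
        h | ⟨c', r', hP', h⟩
      · rw [h] at hs
        cases hs
      rw [h] at hs
      rcases emit_spec hn hM hP' m fun _ r => M.fin r with h | ⟨c', r', hP', h⟩
      · rw [h] at hs
        cases hs
      rw [h] at hs
      exact hP'.good hM hs

theorem sound_mach (hn : 4 ≤ n) (k : ℕ) : Sound n (mach k) k := by
  induction k with
  | zero => exact sound_mach0 hn
  | succ k ih => exact sound_machS hn ih

end Soundness

/-- The state of `mach k` after reading `x` from right to left. -/
def state (k : ℕ) (x : List Lt) : St := x.foldr (fun b s => (mach k).feed s b) nil

theorem good_of_fin {n : ℕ} (hn : 4 ≤ n) {k : ℕ} {x : List Lt}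
    (h : (mach k).fin (state k x) = true) : Good k (Val n x) := by
  have hM := sound_mach hn k
  refine hM.fin x _ ?_ h
  clear h
  induction x with
  | nil => exact Rel.nil k
  | cons b x ih => exact hM.feed _ _ _ ih

theorem fin_one_all : ∀ p ∈ allElements, (mach 1).fin (state 1 p) = true := by decide +kernel

/-- The system is closed. -/
theorem InS.good_one {A : List ℕ} (h : InS A) : Good 1 A := by
  obtain ⟨n, p, hn, hp, rfl⟩ := inS_iff.1 h
  exact good_of_fin hn (fin_one_all p hp)

/-! ### Exhausting the states of the cascade -/

/-- Auxiliary injective coding: the digits of `encodeL p n` in base five are the letters of `p`, a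
zero, and those of `n`. -/
def encodeL (p : List Lt) (n : ℕ) : ℕ :=
  p.rec (Nat.mul 5 n) fun x _ ih => Nat.add (Nat.mul 5 ih) (Nat.succ x.idx)

/-- An injective coding of states by natural numbers. -/
noncomputable def encode (s : St) : ℕ :=
  s.rec 0 1 (fun p => Nat.add (Nat.mul 4 (encodeL p 0)) 2) fun a m c _ ih =>
    Nat.add (Nat.mul 4 (Nat.add (Nat.mul 4 (Nat.add (Nat.mul 4 (encodeL c ih)) m.idx)) a.idx)) 3

theorem idx_lt (a : Lt) : a.idx < 4 := by cases a <;> decide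

theorem idx_inj {a b : Lt} (h : a.idx = b.idx) : a = b := by
  cases a <;> cases b <;> first | rfl | cases h

theorem encodeL_nil (n : ℕ) : encodeL [] n = 5 * n := rfl

theorem encodeL_cons (a : Lt) (p : List Lt) (n : ℕ) :
    encodeL (a :: p) n = 5 * encodeL p n + (a.idx + 1) := rfl

theorem encode_top (p : List Lt) : encode (top p) = 4 * encodeL p 0 + 2 := rfl

theorem encode_lv (a m : Lt) (c : List Lt) (r : St) :
    encode (lv a m c r) = 4 * (4 * (4 * encodeL c (encode r) + m.idx) + a.idx) + 3 := rfl

theorem encodeL_inj {p q : List Lt} {m n : ℕ} (h : encodeL p m = encodeL q n) :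
    p = q ∧ m = n := by
  induction p generalizing q with
  | nil =>
    cases q with
    | nil => rw [encodeL_nil, encodeL_nil] at h; exact ⟨rfl, by omega⟩
    | cons b q =>
      rw [encodeL_nil, encodeL_cons] at h
      have := idx_lt b
      omega
  | cons a p ih =>
    have ha := idx_lt a
    cases q with
    | nil => rw [encodeL_nil, encodeL_cons] at h; omega
    | cons b q =>
      have hb := idx_lt b
      rw [encodeL_cons, encodeL_cons] at h
      obtain ⟨rfl, rfl⟩ := ih (q := q) (by omega)
      obtain rfl := idx_inj (a := a) (b := b) (by omega)
      exact ⟨rfl, rfl⟩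

theorem encode_inj {s t : St} (h : encode s = encode t) : s = t := by
  have hbad : encode bad = 0 := rfl
  have hnil : encode nil = 1 := rfl
  induction s generalizing t with
  | bad => cases t <;> simp only [hbad, hnil, encode_top, encode_lv] at h <;> first | rfl | omega
  | nil => cases t <;> simp only [hbad, hnil, encode_top, encode_lv] at h <;> first | rfl | omega
  | top p =>
    cases t <;> simp only [hbad, hnil, encode_top, encode_lv] at h
    case top q => rw [(encodeL_inj (p := p) (q := q) (m := 0) (n := 0) (by omega)).1]
    all_goals omega
  | lv a m c r ih =>
    cases t <;> simp only [hbad, hnil, encode_top, encode_lv] at h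
    case lv a' m' c' r' =>
      have := idx_lt a
      have := idx_lt a'
      have := idx_lt m
      have := idx_lt m'
      obtain ⟨rfl, hr⟩ := encodeL_inj (p := c) (q := c') (m := encode r) (n := encode r') (by omega)
      obtain rfl := ih hr
      obtain rfl := idx_inj (a := a) (b := a') (by omega)
      obtain rfl := idx_inj (a := m) (b := m') (by omega)
      rfl
    all_goals omega

/-- A letter, thought of as the last letter read, together with a state. -/
abbrev Item := Lt × St

/-- Injective coding of items. -/
noncomputable def key (i : Item) : ℕ := Nat.add (Nat.mul 4 (encode i.2)) i.1.idx

theorem key_inj {i j : Item} (h : key i = key j) : i = j := by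
  have h : 4 * encode i.2 + i.1.idx = 4 * encode j.2 + j.1.idx := h
  have := idx_lt i.1
  have := idx_lt j.1
  exact Prod.ext (idx_inj (by omega)) (encode_inj (by omega))

/-- Binary search trees of pairs of a hash value and a code, ordered by the hash value. -/
inductive HTree
  | leaf
  | node (h c : ℕ) (l r : HTree)

namespace HTree

noncomputable def contains (h c : ℕ) (t : HTree) : Bool :=
  t.rec false fun h' c' _ _ ihl ihr =>
    Bool.rec (Bool.rec ihr ihl (Nat.ble h h')) true (Nat.beq c c')

noncomputable def insert (h c : ℕ) (t : HTree) : HTree :=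
  t.rec (node h c leaf leaf) fun h₁ c₁ l r ihl ihr =>
    Bool.rec (node h₁ c₁ l ihr) (node h₁ c₁ ihl r) (Nat.ble h h₁)

/-- The code `c` occurs in the tree. -/
def Mem (c : ℕ) : HTree → Prop
  | leaf => False
  | node _ c' l r => c = c' ∨ Mem c l ∨ Mem c r

theorem mem_of_contains {h c : ℕ} {t : HTree} (ht : t.contains h c = true) : t.Mem c := by
  induction t with
  | leaf => cases ht
  | node h' c' l r ihl ihr =>
    change Bool.rec (Bool.rec (r.contains h c) (l.contains h c) (Nat.ble h h')) true
      (Nat.beq c c') = true at ht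
    cases hc : Nat.beq c c' with
    | true => exact Or.inl (Nat.eq_of_beq_eq_true hc)
    | false =>
      rw [hc] at ht
      cases hh : Nat.ble h h' <;> rw [hh] at ht
      · exact Or.inr (Or.inr (ihr ht))
      · exact Or.inr (Or.inl (ihl ht))

theorem mem_insert {h c d : ℕ} {t : HTree} : (t.insert h c).Mem d ↔ d = c ∨ t.Mem d := by
  induction t with
  | leaf =>
    change (node h c leaf leaf).Mem d ↔ _
    simp [Mem]
  | node h' c' l r ihl ihr =>
    have : insert h c (node h' c' l r) = Bool.rec (node h' c' l (r.insert h c))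
      (node h' c' (l.insert h c) r) (Nat.ble h h') := rfl
    rw [this]
    cases Nat.ble h h' <;> simp only [Mem, ihl, ihr] <;> tauto

end HTree

/-- Pass `n` to `k` in evaluated form. -/
def forceN {α : Type} (n : ℕ) (k : ℕ → α) : α := n.rec (k 0) fun m _ => k (Nat.succ m)

theorem forceN_eq {α : Type} (n : ℕ) (k : ℕ → α) : forceN n k = k n := by cases n <;> rfl

/-- Put the items obtained from `(a, s)` by reading a letter `b ≠ a` and then a letter `m`, both
among `1`, `2`, `3`, in front of the list `ws`. -/
def succs (M : Mach) (a : Lt) (s : St) (ws : List Item) : List Item :=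
  let f (b : Lt) (ws : List Item) : List Item :=
    bif a.beq b then ws else
      (b, M.feed (M.feed s b) one) :: (b, M.feed (M.feed s b) two) ::
        (b, M.feed (M.feed s b) three) :: ws
  f one (f two (f three ws))

theorem mem_succs {M : Mach} {a b m : Lt} {s : St} (hb : b ≠ a) (hb' : b ≠ big) (hm : m ≠ big)
    (ws : List Item) : (b, M.feed (M.feed s b) m) ∈ succs M a s ws := by
  cases a <;> cases b <;> cases m <;> simp [succs, beq] at hb hb' hm ⊢

theorem mem_succs_of_mem {M : Mach} {a : Lt} {s : St} {ws : List Item} {i : Item} (hi : i ∈ ws) :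
    i ∈ succs M a s ws := by
  cases a <;> simp [succs, beq, hi]

/-- Depth-first search through the items reachable from the work list `ws`, where the codes of the
items seen before are in `t`. The result is `true` if the search terminates and all final checks
succeed. Codes are hashed modulo a prime to keep the search tree balanced. -/
noncomputable def search (M : Mach) (fuel : ℕ) : List Item → HTree → Bool :=
  fuel.rec (fun _ _ => false) fun _ ih ws t =>
    match ws with
    | [] => true
    | (a, s) :: ws =>
      s.force false fun s => forceN (key (a, s)) fun c => forceN (Nat.mod c 2147483647) fun h =>
        bif t.contains h c then ih ws t else
          bif M.fin s then ih (succs M a s ws) (t.insert h c) else false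

/-- The items in `t` pass the final check, and their successors are in `t` or in `ws`. -/
def Explored (M : Mach) (ws : List Item) (t : HTree) : Prop :=
  ∀ a s, t.Mem (key (a, s)) → M.fin s = true ∧
    ∀ b m, b ≠ a → b ≠ big → m ≠ big → t.Mem (key (b, M.feed (M.feed s b) m)) ∨
      (b, M.feed (M.feed s b) m) ∈ ws

theorem explored_of_search {M : Mach} {fuel : ℕ} {ws : List Item} {t : HTree}
    (h : search M fuel ws t = true) (ht : Explored M ws t) :
    ∃ t', Explored M [] t' ∧ (∀ i ∈ ws, t'.Mem (key i)) ∧ ∀ c, t.Mem c → t'.Mem c := by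
  induction fuel generalizing ws t with
  | zero => cases h
  | succ fuel ih =>
    match ws, h with
    | [], _ => exact ⟨t, ht, by simp, fun _ => id⟩
    | (a, s) :: ws, h =>
      change (s.force false fun s => forceN (key (a, s)) fun c => forceN (Nat.mod c 2147483647)
        fun h => bif t.contains h c then search M fuel ws t else
          bif M.fin s then search M fuel (succs M a s ws) (t.insert h c) else false) = true at h
      rcases force_eq false s fun s => forceN (key (a, s)) fun c => forceN (Nat.mod c 2147483647)
        fun h => bif t.contains h c then search M fuel ws t else
          bif M.fin s then search M fuel (succs M a s ws) (t.insert h c) else false with h' | h' <;>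
        rw [h'] at h
      · cases h
      rw [forceN_eq, forceN_eq] at h
      cases hc : t.contains (Nat.mod (key (a, s)) 2147483647) (key (a, s)) with
      | true =>
        rw [hc, cond_true] at h
        have hmem := HTree.mem_of_contains hc
        obtain ⟨t', h1, h2, h3⟩ := ih h fun a' s' h' => by
          refine ⟨(ht a' s' h').1, fun b m hb hb' hm => ?_⟩
          rcases (ht a' s' h').2 b m hb hb' hm with h | h
          · exact Or.inl h
          · rcases List.mem_cons.1 h with h | h
            · exact Or.inl (by rwa [h])
            · exact Or.inr h
        refine ⟨t', h1, fun i hi => ?_, h3⟩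
        rcases List.mem_cons.1 hi with rfl | hi
        · exact h3 _ hmem
        · exact h2 i hi
      | false =>
        rw [hc, cond_false] at h
        cases hf : M.fin s with
        | false => simp [hf] at h
        | true =>
          rw [hf, cond_true] at h
          obtain ⟨t', h1, h2, h3⟩ := ih h fun a' s' h' => by
            rcases HTree.mem_insert.1 h' with h' | h'
            · obtain ⟨rfl, rfl⟩ := Prod.mk.inj (key_inj h')
              exact ⟨hf, fun b m hb hb' hm => Or.inr (mem_succs hb hb' hm ws)⟩
            · refine ⟨(ht a' s' h').1, fun b m hb hb' hm => ?_⟩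
              rcases (ht a' s' h').2 b m hb hb' hm with h | h
              · exact Or.inl (HTree.mem_insert.2 (Or.inr h))
              · rcases List.mem_cons.1 h with h | h
                · exact Or.inl (HTree.mem_insert.2 (Or.inl (by rw [h])))
                · exact Or.inr (mem_succs_of_mem h)
          refine ⟨t', h1, fun i hi => ?_, fun c hc => h3 c (HTree.mem_insert.2 (Or.inr hc))⟩
          rcases List.mem_cons.1 hi with rfl | hi
          · exact h3 _ (HTree.mem_insert.2 (Or.inl rfl))
          · exact h2 i (mem_succs_of_mem hi)

/-- The words `x` that arise in one day from words without runs of length at least four, in which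
`big` is allowed only as the last letter. They are built from the right; the first argument is the
second letter of `x` (the letter of its first run), and `big` if `x` is empty. -/
inductive Input : Lt → List Lt → Prop
  | nil : Input big []
  | last : Input big [one, big]
  | cons {a b m : Lt} {x : List Lt} : Input a x → b ≠ a → b ≠ big → m ≠ big →
      Input b (m :: b :: x)

/-- The two initial items stand for the empty word and for the word produced by a final `big`; in
either case any of the letters `1`, `2`, `3` may come next. -/
theorem search_true : search (mach 27) 30000 [(big, state 27 []), (big, state 27 [one, big])] .leaf
    = true := by
  decide +kernel

theorem good_of_input {n : ℕ} (hn : 4 ≤ n) {a : Lt} {x : List Lt} (hx : Input a x) :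
    Good 27 (Val n x) := by
  obtain ⟨t, h1, h2, -⟩ := explored_of_search search_true (fun a s h => by cases h)
  refine good_of_fin hn (h1 a _ ?_).1
  induction hx with
  | nil => exact h2 _ (by simp)
  | last => exact h2 _ (by simp)
  | cons _ hb hb' hm ih =>
    rcases (h1 _ _ ih).2 _ _ hb hb' hm with h | h
    · exact h
    · simp at h

/-! ### The first two days -/

/-- There is no run of length four. -/
def NoFour {α : Type} (s : List α) : Prop := ∀ a, ¬ [a, a, a, a] <:+: s

theorem NoFour.mono {α : Type} {s t : List α} (h : NoFour t) (hs : s <:+: t) : NoFour s :=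
  fun a ha => h a (ha.trans hs)

theorem NoFour.run_le {α : Type} {b : α} {m : ℕ} {t : List α}
    (h : NoFour (List.replicate (m + 1) b ++ t)) : m + 1 ≤ 3 := by
  by_contra hm
  obtain ⟨k, rfl⟩ : ∃ k, m = k + 3 := ⟨m - 3, by omega⟩
  refine h b ⟨[], List.replicate k b ++ t, ?_⟩
  simp [List.replicate_succ]

theorem noFour_JHC (s : List ℕ) : NoFour (JHC s) := by
  induction s using run_induction with
  | nil => simp [JHC_nil, NoFour]
  | run m b t ht ih =>
    rw [JHC_run m b ht]
    cases t with
    | nil =>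
      intro a ha
      have := ha.length_le
      simp [JHC_nil] at this
    | cons c t =>
      obtain ⟨k, u, hu⟩ := exists_JHC_cons c t
      rw [hu] at ih ⊢
      have hcb : c ≠ b := by simpa using ht
      intro a ha
      rcases List.infix_cons_iff.1 ha with h | h
      · simp only [List.cons_prefix_cons] at h
        exact hcb (by rw [← h.2.2.2.1, h.2.1])
      rcases List.infix_cons_iff.1 h with h | h
      · simp only [List.cons_prefix_cons] at h
        exact hcb (by rw [← h.2.2.1, h.1])
      exact ih a h

/-- A letter `n ≥ 4` is separated from what follows, as later strings only start with `1`, `2`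
or `3`. -/
theorem sep_of_noFour {n : ℕ} (hn : 4 ≤ n) {s : List ℕ} (hs : NoFour s)
    (h : ∀ d ∈ s.head?, d ≤ 3) : Sep n s := fun j => by
  induction j generalizing s with
  | zero => exact fun h' => by have := h n h'; omega
  | succ j ih =>
    refine ih (noFour_JHC s) fun d hd => ?_
    cases s with
    | nil => simp [JHC_nil] at hd
    | cons b s =>
      obtain ⟨m, t, hm, ht⟩ := exists_run b s
      rw [hm] at hs hd
      rw [JHC_run m b ht] at hd
      have := hs.run_le
      simp at hd
      omega

/-- Runs of length at most three turn into letters, so the next day is an `Input`. -/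
theorem exists_input {n : ℕ} (hn : 4 ≤ n) {l e : List Lt} (hl : big ∉ l)
    (he : e = [] ∨ e = [big]) (h : NoFour (l ++ e)) :
    ∃ x, Input ((l ++ e).head?.getD big) x ∧ JHC (Val n (l ++ e)) = Val n x := by
  induction l using run_induction with
  | nil =>
    rcases he with rfl | rfl
    · exact ⟨[], Input.nil, JHC_nil⟩
    · exact ⟨[one, big], Input.last, JHC_replicate 0 n⟩
  | run m b t ht ih =>
    have hb : b ≠ big := fun hb => hl (by simp [hb, List.replicate_succ])
    have hle : m + 1 ≤ 3 := by
      rw [List.append_assoc] at h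
      exact h.run_le
    obtain ⟨x, hx, hJ⟩ := ih (fun ht => hl (List.mem_append_right _ ht))
      (h.mono ⟨List.replicate (m + 1) b, [], by simp⟩)
    have hbt : b ≠ (t ++ e).head?.getD big := by
      rcases t with _ | ⟨c, t⟩
      · rcases he with rfl | rfl <;> simpa using hb
      · simpa [eq_comm] using ht
    have hbt' : (Val n (t ++ e)).head? ≠ some (b.val n) := by
      rcases hte : t ++ e with _ | ⟨c, u⟩
      · simp
      · rw [hte] at hbt
        simpa [val_inj hn, eq_comm] using hbt
    have hJ' := JHC_run m (b.val n) hbt'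
    rw [hJ] at hJ'
    have hV : Val n (List.replicate (m + 1) b ++ t ++ e) =
        List.replicate (m + 1) (b.val n) ++ Val n (t ++ e) := by
      simp [Val, List.append_assoc]
    have hhd : (List.replicate (m + 1) b ++ t ++ e).head?.getD big = b := by
      simp [List.replicate_succ]
    rw [hV, hhd, hJ']
    obtain rfl | rfl | rfl : m = 0 ∨ m = 1 ∨ m = 2 := by omega
    · exact ⟨one :: b :: x, hx.cons hbt hb (by simp), rfl⟩
    · exact ⟨two :: b :: x, hx.cons hbt hb (by simp), rfl⟩
    · exact ⟨three :: b :: x, hx.cons hbt hb (by simp), rfl⟩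

theorem exists_word {l : List ℕ} (hl : ∀ x ∈ l, 0 < x ∧ x ≤ 3) :
    ∃ p : List Lt, big ∉ p ∧ ∀ n, Val n p = l := by
  induction l with
  | nil => exact ⟨[], by simp, fun n => rfl⟩
  | cons a l ih =>
    obtain ⟨p, hp, h⟩ := ih fun x hx => hl x (List.mem_cons_of_mem a hx)
    have ha := hl a List.mem_cons_self
    obtain rfl | rfl | rfl : a = 1 ∨ a = 2 ∨ a = 3 := by omega
    · exact ⟨one :: p, by simp [hp], fun n => by rw [Val_cons, h]; rfl⟩
    · exact ⟨two :: p, by simp [hp], fun n => by rw [Val_cons, h]; rfl⟩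
    · exact ⟨three :: p, by simp [hp], fun n => by rw [Val_cons, h]; rfl⟩

/-- A string without runs of length four over `{1, 2, 3}`, possibly followed by one integer `n ≥ 4`,
is good after 28 days. -/
theorem good_segment {n : ℕ} (hn : 4 ≤ n) {l e : List ℕ} (hl : ∀ x ∈ l, 0 < x ∧ x ≤ 3)
    (he : e = [] ∨ e = [n]) (h : NoFour (l ++ e)) : Good 28 (l ++ e) := by
  obtain ⟨p, hp, hpl⟩ := exists_word hl
  obtain ⟨q, hq, rfl⟩ : ∃ q : List Lt, (q = [] ∨ q = [big]) ∧ Val n q = e := by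
    rcases he with rfl | rfl
    · exact ⟨[], Or.inl rfl, rfl⟩
    · exact ⟨[big], Or.inr rfl, rfl⟩
  rw [← hpl n, ← Val_append] at h ⊢
  obtain ⟨x, hx, hJ⟩ := exists_input hn hp hq fun a ha => h (a.val n) (ha.map (Lt.val n))
  rw [good_succ, hJ]
  exact good_of_input hn hx

/-- Cut after each integer `n ≥ 4`. -/
theorem good_of_isChain {y : List ℕ} (h0 : ∀ x ∈ y, 0 < x) (h4 : NoFour y)
    (hc : y.IsChain fun a b => a ≤ 3 ∨ b ≤ 3) : Good 28 y := by
  induction hN : y.length using Nat.strong_induction_on generalizing y with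
  | _ N ih =>
    by_cases hy : ∀ x ∈ y, x ≤ 3
    · simpa using good_segment (le_refl 4) (l := y) (e := []) (fun x hx => ⟨h0 x hx, hy x hx⟩)
        (Or.inl rfl) (by simpa using h4)
    -- `n` is the first letter exceeding `3`
    obtain ⟨l, n, r, rfl, hl, hn⟩ : ∃ l n r, y = l ++ n :: r ∧ (∀ x ∈ l, x ≤ 3) ∧ 4 ≤ n := by
      clear h0 h4 hc hN ih
      induction y with
      | nil => simp at hy
      | cons a y ih =>
        by_cases ha : a ≤ 3
        · obtain ⟨l, n, r, rfl, hl, hn⟩ := ih (by simpa [ha] using hy)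
          exact ⟨a :: l, n, r, rfl, by simpa [ha] using hl, hn⟩
        · exact ⟨[], a, y, rfl, by simp, by omega⟩
    have hr : NoFour r := h4.mono ⟨l ++ [n], [], by simp⟩
    have hc' := (List.isChain_append.1 hc).2.1
    rw [show l ++ n :: r = (l ++ [n]) ++ r by simp] at h4 ⊢
    refine (good_segment hn (fun x hx => ⟨h0 x (by simp [hx]), hl x hx⟩) (Or.inr rfl)
      (h4.mono ⟨[], r, by simp⟩)).append
      (ih r.length ?_ (fun x hx => h0 x (by simp [hx])) hr hc'.tail rfl) (splits_of_sep ?_)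
    · rw [← hN]
      simp
      omega
    · intro d hd
      obtain rfl : n = d := by simpa using hd
      refine sep_of_noFour hn hr fun c hc => ?_
      cases r with
      | nil => simp at hc
      | cons a r =>
        obtain rfl : a = c := by simpa using hc
        have := (List.isChain_cons_cons.1 hc').1
        omega

theorem JHC_first_day {w : List ℕ} (hw : ∀ x ∈ w, 0 < x ∧ x ≤ 3) :
    (∀ x ∈ JHC w, 0 < x) ∧ (JHC w).IsChain fun a b => a ≤ 3 ∨ b ≤ 3 := by
  induction w using run_induction with
  | nil => simp [JHC_nil]
  | run m b t ht ih =>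
    have hb := hw b (by simp)
    obtain ⟨h1, h2⟩ := ih fun x hx => hw x (by simp [hx])
    rw [JHC_run m b ht]
    refine ⟨by simpa [hb.1] using h1, ?_⟩
    rw [List.isChain_cons_cons]
    refine ⟨Or.inr hb.2, ?_⟩
    cases hJ : JHC t with
    | nil => simp
    | cons c u =>
      rw [hJ] at h2
      exact List.isChain_cons_cons.2 ⟨Or.inl hb.2, h2⟩

theorem mem_of_mem_Val {n : ℕ} {p : List Lt} (hp : big ∉ p) {x : ℕ} (hx : x ∈ Val n p) :
    x ∈ ({1, 2, 3} : Set ℕ) := by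
  obtain ⟨a, ha, rfl⟩ := List.mem_map.1 hx
  cases a with
  | big => exact absurd ha hp
  | _ => simp [val]

/-- The 92 elements and the two transuranic families, as a closed audioactive system. -/
def system : ClosedAudioactiveSystem where
  S := sysS
  u := Val 4 pu
  v := Val 4 np
  S_atom A hA := InS.isAtom (Or.inl hA)
  S_entries A hA x hx := by
    obtain ⟨p, hp, rfl⟩ := List.mem_map.1 (List.mem_toFinset.1 hA)
    exact mem_of_mem_Val (big_notMem.1 p hp) hx
  u_entries x hx := mem_of_mem_Val big_notMem.2.1 hx
  v_entries x hx := mem_of_mem_Val big_notMem.2.2 hx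
  u_atom n hn := InS.isAtom (Or.inr ⟨n, hn, Or.inl rfl⟩)
  v_atom n hn := InS.isAtom (Or.inr ⟨n, hn, Or.inr rfl⟩)
  closed A hA := InS.good_one hA

end Cosmo

/-- Cosmological Theorem (quantitative form, N = 29). -/
theorem cosmological_theorem_29 :
    ∃ sys : ClosedAudioactiveSystem,
      ∀ w : List ℕ, IsString w → (∀ x ∈ w, x ∈ ({1, 2, 3} : Set ℕ)) →
        ∃ As : List (List ℕ), SplitCompound (JHC^[29] w) As ∧
          ∀ A ∈ As, InSystem sys.S sys.u sys.v A := by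
  refine ⟨Cosmo.system, fun w hw hw' => ?_⟩
  have h : ∀ x ∈ w, 0 < x ∧ x ≤ 3 := fun x hx => by
    have := hw' x hx
    simp only [Set.mem_insert_iff, Set.mem_singleton_iff] at this
    omega
  obtain ⟨h1, h2⟩ := Cosmo.JHC_first_day h
  obtain ⟨As, hAs, hmem⟩ : Cosmo.Good 29 w :=
    Cosmo.good_succ.2 (Cosmo.good_of_isChain h1 (Cosmo.noFour_JHC w) h2)
  exact ⟨As, hAs, hmem⟩
end

section
/- Lemma (length bound for mature strings): For every string w all of whose entries lie in {1,2,3}, whenever JHC^9(w) is a split compound of atoms A_1, …, A_k, every one of the atoms A_j has length at most 80. -/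
/-!
An atom inside a split compound `V = JHC^9(w)` has no cut of `V` in its interior (`not_cut_atom`):
the cut would split the atom, because the last letter of a string never changes and so the letters
that follow the atom cannot interfere. Hence it suffices to find a cut of `V` inside every window
of 81 consecutive letters. Two families of cuts are enough:

* `2.R`, where `R` begins with a complete pattern `1X`, `111`, `3X` or `3XX`; such beginnings are
  permuted by the operator, so no iterate of `R` starts with `2` (`ClassA.neverHead`);
* `4.R`, where `R` begins with a complete run of at most three letters `x ≤ 3`; the iterates of `R`
  again begin like this (`SmallRun.neverHead`).

The run lengths in `w` are unbounded, so `JHC(w)` may have arbitrarily large letters. In `JHC(w)`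
there is no run of length four and there are no two adjacent letters above three, and this persists;
therefore replacing every letter above `4` by `4` commutes with the operator (`clamp_iter`), and
cuts of the clamped string are cuts of the string (`Cut.of_clamp`).

What remains is a regular-language question over the letters `1, …, 4`. Clamped day-one strings are
accepted by the automaton `dayOne`. The operator is computed letter by letter by a scanner that
remembers its current run, and as runs are short, a cascade of `n` scanners behaves like a finite
transducer for `JHC^n`. An exhaustive search through the reachable states of the product of an
input automaton, a cascade, and an output automaton proves that `JHC^n` maps accepted strings to
accepted strings (`accepts_iter`). Two searches, both evaluated by the kernel, lead from `dayOne` to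
an explicit automaton `dayFour` in three steps, and from there in five steps to the automaton `gap`,
which gets stuck as soon as it sees no cut from the two families for more than 80 letters
(`exists_cut`). The functions that take part in the evaluation are written with recursors and in
continuation-passing style, so that evaluation is direct and intermediate results are shared.
-/

open Filter

namespace LookSay

/-! ### The operator as a left-to-right scan -/

/-- Look-and-say output of the rest `l` of a string, when the current run consists of `k`
letters `x` read so far. -/
def go (x k : ℕ) : List ℕ → List ℕ
  | [] => [k, x]
  | y :: l => if y = x then go x (k + 1) l else k :: x :: go y 1 l

theorem splitBy_loop_flatMap (l : List ℕ) : ∀ (x : ℕ) (g : List ℕ) (gs : List (List ℕ)),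
    (∀ y ∈ g, y = x) →
    (List.splitBy.loop (· == ·) l x g gs).flatMap (fun r => [r.length, r.headI]) =
      gs.reverse.flatMap (fun r => [r.length, r.headI]) ++ go x (g.length + 1) l := by
  have hd : ∀ (x : ℕ) (g : List ℕ), (∀ y ∈ g, y = x) → (g.reverse ++ [x]).headI = x := by
    intro x g hg
    rcases h : g.reverse with _ | ⟨b, t⟩
    · rfl
    · exact hg b (by rw [← List.mem_reverse, h]; simp)
  induction l with
  | nil =>
    intro x g gs hg
    simp [List.splitBy.loop, go, hd x g hg, List.flatMap_append]
  | cons y l ih =>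
    intro x g gs hg
    by_cases h : y = x
    · subst h
      have := ih y (y :: g) gs (by simpa using hg)
      simpa [List.splitBy.loop, go] using this
    · have h' : (x == y) = false := by simpa using fun e => h e.symm
      have := ih y [] ((x :: g).reverse :: gs) (by simp)
      simp only [List.splitBy.loop, h', go, h, if_false]
      rw [this]
      simp [List.flatMap_append, hd x g hg]

theorem JHC_nil : JHC [] = [] := rfl

theorem JHC_cons (x : ℕ) (l : List ℕ) : JHC (x :: l) = go x 1 l := by
  have := splitBy_loop_flatMap l x [] [] (by simp)
  simpa [JHC, List.splitBy] using this

theorem JHC_iter_nil (n : ℕ) : JHC^[n] [] = [] := by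
  induction n with
  | zero => rfl
  | succ n ih => rw [Function.iterate_succ_apply, JHC_nil, ih]

theorem go_eq (l : List ℕ) : ∀ x k, ∃ j T, k ≤ j ∧ go x k l = j :: x :: T := by
  induction l with
  | nil => intro x k; exact ⟨k, [], le_rfl, rfl⟩
  | cons y l ih =>
    intro x k
    by_cases h : y = x
    · obtain ⟨j, T, hj, e⟩ := ih x (k + 1)
      exact ⟨j, T, by omega, by simp [go, h, e]⟩
    · exact ⟨k, go y 1 l, le_rfl, by simp [go, h]⟩

theorem JHC_ne_nil {l : List ℕ} (h : l ≠ []) : JHC l ≠ [] := by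
  rcases l with _ | ⟨x, l⟩
  · exact absurd rfl h
  · obtain ⟨j, T, -, e⟩ := go_eq l x 1
    rw [JHC_cons, e]; simp

theorem go_getLast? (l : List ℕ) : ∀ x k, (go x k l).getLast? = (x :: l).getLast? := by
  induction l with
  | nil => intro x k; simp [go]
  | cons y l ih =>
    intro x k
    by_cases h : y = x
    · simp [go, h, ih, List.getLast?_cons_cons]
    · obtain ⟨j, T, -, e⟩ := go_eq l y 1
      have := ih y 1
      rw [e] at this
      simp [go, h, e, List.getLast?_cons_cons] at this ⊢
      exact this

theorem JHC_getLast? (l : List ℕ) : (JHC l).getLast? = l.getLast? := by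
  rcases l with _ | ⟨x, l⟩
  · rfl
  · rw [JHC_cons, go_getLast?]

theorem JHC_iter_getLast? (n : ℕ) (l : List ℕ) : (JHC^[n] l).getLast? = l.getLast? := by
  induction n generalizing l with
  | zero => rfl
  | succ n ih => rw [Function.iterate_succ_apply, ih, JHC_getLast?]

/-! ### Concatenation and splitting -/

theorem go_append (L R : List ℕ) : ∀ x k, R.head? ≠ (x :: L).getLast? →
    go x k (L ++ R) = go x k L ++ JHC R := by
  induction L with
  | nil =>
    intro x k h
    rcases R with _ | ⟨y, R⟩
    · simp [go, JHC_nil]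
    · have : y ≠ x := by simpa using h
      simp [go, this, JHC_cons]
  | cons y L ih =>
    intro x k h
    rw [List.getLast?_cons_cons] at h
    by_cases e : y = x
    · subst e; simp [go, ih _ _ h]
    · simp [go, e, ih _ _ h]

/-- Two factors that do not touch develop independently for one step. -/
theorem JHC_append {L R : List ℕ} (hL : L ≠ []) (h : R.head? ≠ L.getLast?) :
    JHC (L ++ R) = JHC L ++ JHC R := by
  rcases L with _ | ⟨x, L⟩
  · exact absurd rfl hL
  · rw [List.cons_append, JHC_cons, JHC_cons, go_append _ _ _ _ h]

theorem go_length (l : List ℕ) : ∀ x k j, (go x k l).length = (go x j l).length := by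
  induction l with
  | nil => intro x k j; simp [go]
  | cons y l ih =>
    intro x k j
    by_cases e : y = x
    · simp [go, e, ih x (k + 1) (j + 1)]
    · simp [go, e]

theorem go_append_touch (L R : List ℕ) : ∀ x k y, (x :: L).getLast? = some y →
    (go x k (L ++ y :: R)).length + 2 = (go x k L).length + (JHC (y :: R)).length := by
  induction L with
  | nil =>
    intro x k y h
    have h : x = y := by simpa using h
    subst h
    simp [go, JHC_cons, go_length R x (k + 1) 1]; omega
  | cons z L ih =>
    intro x k y h
    rw [List.getLast?_cons_cons] at h
    by_cases e : z = x
    · subst e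
      simpa [go] using ih _ _ _ h
    · have := ih z 1 y h
      simp [go, e]; omega

/-- Touching factors merge a run, which costs two letters. -/
theorem JHC_append_touch {L R : List ℕ} (hR : R ≠ []) (h : R.head? = L.getLast?) :
    (JHC (L ++ R)).length + 2 = (JHC L).length + (JHC R).length := by
  rcases R with _ | ⟨y, R⟩
  · exact absurd rfl hR
  rcases L with _ | ⟨x, L⟩
  · simp at h
  rw [List.cons_append, JHC_cons, JHC_cons x L]
  exact go_append_touch L R x 1 y (by simpa using h.symm)

/-- `NeverHead l R`: no iterate of `R` starts with the letter `l`. As the last letter of a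
string never changes, this says exactly that any string ending in `l` can be split
off in front of `R`. -/
def NeverHead (l : ℕ) (R : List ℕ) : Prop := ∀ n, (JHC^[n] R).head? ≠ some l

theorem iter_append_of_neverHead {L R : List ℕ} {l : ℕ} (hl : L.getLast? = some l)
    (h : NeverHead l R) (n : ℕ) : JHC^[n] (L ++ R) = JHC^[n] L ++ JHC^[n] R := by
  induction n with
  | zero => rfl
  | succ n ih =>
    rw [Function.iterate_succ_apply', ih, Function.iterate_succ_apply', Function.iterate_succ_apply']
    have e : (JHC^[n] L).getLast? = some l := by rw [JHC_iter_getLast?, hl]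
    apply JHC_append
    · intro h0; simp [h0] at e
    · rw [e]; exact h n

theorem JHC_iter_ne_nil {l : List ℕ} (h : l ≠ []) (n : ℕ) : JHC^[n] l ≠ [] := by
  intro h0
  have := JHC_iter_getLast? n l
  rw [h0] at this
  exact h (by simpa using this.symm)

theorem JHC_flatten_length_le (Xs : List (List ℕ)) (h : ∀ X ∈ Xs, X ≠ []) :
    (JHC Xs.flatten).length ≤ ((Xs.map JHC).flatten).length := by
  induction Xs with
  | nil => simp [JHC_nil]
  | cons X Xs ih =>
    have ih := ih fun Y hY => h Y (by simp [hY])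
    simp only [List.flatten_cons, List.map_cons, List.length_append]
    by_cases e : Xs.flatten.head? = X.getLast?
    · have hX : X ≠ [] := h X (by simp)
      have hne : Xs.flatten ≠ [] := by
        intro h0; rw [h0] at e
        exact hX (by simpa using e.symm)
      have := JHC_append_touch hne e
      omega
    · rw [JHC_append (h X (by simp)) e, List.length_append]; omega

/-- If one step acts factorwise on a concatenation, then the first factor does not touch the
rest, and the step acts factorwise on the rest. -/
theorem JHC_flatten_tail {X : List ℕ} {Xs : List (List ℕ)} (h : ∀ Y ∈ X :: Xs, Y ≠ [])
    (e : JHC (X :: Xs).flatten = ((X :: Xs).map JHC).flatten) :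
    Xs.flatten.head? ≠ X.getLast? ∧ JHC Xs.flatten = (Xs.map JHC).flatten := by
  have hX : X ≠ [] := h X (by simp)
  have hle := JHC_flatten_length_le Xs fun Y hY => h Y (by simp [hY])
  simp only [List.flatten_cons, List.map_cons] at e
  have ht : Xs.flatten.head? ≠ X.getLast? := by
    intro ht
    have hne : Xs.flatten ≠ [] := by
      intro h0; rw [h0] at ht
      exact hX (by simpa using ht.symm)
    have := JHC_append_touch hne ht
    rw [e, List.length_append] at this
    omega
  refine ⟨ht, ?_⟩
  rw [JHC_append hX ht] at e
  exact List.append_cancel_left e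

theorem compound_tail {X : List ℕ} {Xs : List (List ℕ)} (h : ∀ Y ∈ X :: Xs, Y ≠ [])
    (e : ∀ n : ℕ, JHC^[n] (X :: Xs).flatten = ((X :: Xs).map fun A => JHC^[n] A).flatten) :
    (∀ n : ℕ, (JHC^[n] Xs.flatten).head? ≠ X.getLast?) ∧
      ∀ n : ℕ, JHC^[n] Xs.flatten = (Xs.map fun A => JHC^[n] A).flatten := by
  have key : ∀ n, (((Xs.map fun A => JHC^[n] A).flatten).head? ≠ X.getLast?) ∧
      JHC ((Xs.map fun A => JHC^[n] A).flatten) = (Xs.map fun A => JHC^[n+1] A).flatten := by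
    intro n
    have := JHC_flatten_tail (X := JHC^[n] X) (Xs := Xs.map fun A => JHC^[n] A) (by
        intro Y hY
        have : Y ∈ (X :: Xs).map fun A => JHC^[n] A := hY
        obtain ⟨Z, hZ, rfl⟩ := List.mem_map.1 this
        exact JHC_iter_ne_nil (h Z hZ) n) (by
        have h1 := e n
        have h2 := e (n + 1)
        rw [Function.iterate_succ_apply', h1] at h2
        simpa [Function.comp_def, Function.iterate_succ_apply'] using h2)
    rw [JHC_iter_getLast?] at this
    simpa [Function.comp_def, Function.iterate_succ_apply'] using this
  have hn : ∀ n : ℕ, JHC^[n] Xs.flatten = (Xs.map fun A => JHC^[n] A).flatten := by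
    intro n
    induction n with
    | zero => simp
    | succ n ih => rw [Function.iterate_succ_apply', ih, (key n).2]
  exact ⟨fun n => by rw [hn]; exact (key n).1, hn⟩

/-- A factor of a split compound, followed by the remaining factors, splits off. -/
theorem compound_neverHead (B : List (List ℕ)) {A : List ℕ} {C : List (List ℕ)} {l : ℕ}
    (h : ∀ Y ∈ B ++ A :: C, Y ≠ []) (hl : A.getLast? = some l)
    (e : ∀ n : ℕ, JHC^[n] (B ++ A :: C).flatten =
      ((B ++ A :: C).map fun A => JHC^[n] A).flatten) : NeverHead l C.flatten := by
  induction B with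
  | nil => exact fun n => hl ▸ (compound_tail h e).1 n
  | cons X B ih =>
    exact ih (fun Y hY => h Y (by simp only [List.cons_append, List.mem_cons]; exact Or.inr hY))
      (compound_tail h e).2

/-- `Cut L R`: both parts are nonempty and `L.R` is a splitting. -/
def Cut (L R : List ℕ) : Prop := R ≠ [] ∧ ∃ l, L.getLast? = some l ∧ NeverHead l R

/-- An atom in a split compound has no cut of the whole string in its interior. -/
theorem not_cut_atom {V A : List ℕ} {B C : List (List ℕ)} (hV : SplitCompound V (B ++ A :: C))
    {L R : List ℕ} (hA : A = L ++ R) (hR : R ≠ []) : ¬ Cut L (R ++ C.flatten) := by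
  rintro ⟨-, l, hl, hcut⟩
  obtain ⟨hat, hVe, hsp⟩ := hV
  have hatom := hat A (by simp)
  refine hatom.2 L R ⟨hA, ?_, hR, ?_⟩
  · rintro rfl; simp at hl
  obtain ⟨r, hr⟩ : ∃ r, R.getLast? = some r :=
    Option.ne_none_iff_exists'.1 (by simpa using hR)
  have hAr : A.getLast? = some r := by rw [hA, List.getLast?_append, hr]; rfl
  have hC : NeverHead r C.flatten :=
    compound_neverHead B (fun Y hY => (hat Y hY).1.1) hAr (hVe ▸ hsp)
  intro n
  rw [hA]
  apply iter_append_of_neverHead hl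
  intro n hn
  apply hcut n
  rw [iter_append_of_neverHead hr hC, List.head?_append, hn]; rfl

/-! ### Two families of cuts -/

/-- Beginnings that are permuted by the operator, `1¹X¹ → 1³ → 3¹Xⁿ (n ≤ 2) → 1¹X¹`, so that no
iterate starts with `2`. -/
inductive ClassA : List ℕ → Prop
  | one {X Y : ℕ} (T : List ℕ) (hX : X ≠ 1) (hY : Y ≠ X) : ClassA (1 :: X :: Y :: T)
  | ones {Y : ℕ} (T : List ℕ) (hY : Y ≠ 1) : ClassA (1 :: 1 :: 1 :: Y :: T)
  | three {X Y : ℕ} (T : List ℕ) (hX : X ≠ 3) (hY : Y ≠ X) : ClassA (3 :: X :: Y :: T)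
  | three' {X Y : ℕ} (T : List ℕ) (hX : X ≠ 3) (hY : Y ≠ X) : ClassA (3 :: X :: X :: Y :: T)

theorem ClassA.step {R : List ℕ} (h : ClassA R) : ClassA (JHC R) := by
  cases h with
  | one T hX hY =>
    simp only [JHC_cons, go, hX, hY, if_false]
    exact .ones _ hX
  | @ones Y T hY =>
    obtain ⟨j, S, -, e⟩ := go_eq T Y 1
    simp only [JHC_cons, go, hY, if_false, if_true, e]
    by_cases hj : j = 1
    · subst hj; exact .three' _ (by decide) hY
    · exact .three _ (by decide) hj
  | three T hX hY =>
    simp only [JHC_cons, go, hX, hY, if_false]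
    exact .one _ (by decide) (by decide)
  | three' T hX hY =>
    simp only [JHC_cons, go, hX, hY, if_false, if_true]
    exact .one _ (by decide) (by decide)

theorem ClassA.neverHead {R : List ℕ} (h : ClassA R) : NeverHead 2 R := by
  intro n
  have : ClassA (JHC^[n] R) := by
    induction n with
    | zero => exact h
    | succ n ih => rw [Function.iterate_succ_apply']; exact ih.step
  generalize JHC^[n] R = S at this
  cases this <;> simp

/-- Strings that start with a complete run of at most three letters `x ∈ {1, 2, 3}`; the
iterates have the same property. -/
inductive SmallRun : List ℕ → Prop
  | one {x y : ℕ} (T : List ℕ) (h0 : 1 ≤ x) (h3 : x ≤ 3) (hy : y ≠ x) : SmallRun (x :: y :: T)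
  | two {x y : ℕ} (T : List ℕ) (h0 : 1 ≤ x) (h3 : x ≤ 3) (hy : y ≠ x) :
      SmallRun (x :: x :: y :: T)
  | three {x y : ℕ} (T : List ℕ) (h0 : 1 ≤ x) (h3 : x ≤ 3) (hy : y ≠ x) :
      SmallRun (x :: x :: x :: y :: T)

theorem SmallRun.of_pairs {k x j y : ℕ} (T : List ℕ) (h1 : 1 ≤ k) (h3 : k ≤ 3) (hy : y ≠ x) :
    SmallRun (k :: x :: j :: y :: T) := by
  by_cases hk : x = k
  · subst hk
    by_cases hj : j = x
    · subst hj; exact .three _ h1 h3 hy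
    · exact .two _ h1 h3 hj
  · exact .one _ h1 h3 hk

theorem SmallRun.step {R : List ℕ} (h : SmallRun R) : SmallRun (JHC R) := by
  cases h with
  | @one x y T h0 h3 hy =>
    obtain ⟨j, S, -, e⟩ := go_eq T y 1
    simp only [JHC_cons, go, hy, if_false, e]
    exact .of_pairs _ (by decide) (by decide) hy
  | @two x y T h0 h3 hy =>
    obtain ⟨j, S, -, e⟩ := go_eq T y 1
    simp only [JHC_cons, go, hy, if_false, if_true, e]
    exact .of_pairs _ (by decide) (by decide) hy
  | @three x y T h0 h3 hy =>
    obtain ⟨j, S, -, e⟩ := go_eq T y 1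
    simp only [JHC_cons, go, hy, if_false, if_true, e]
    exact .of_pairs _ (by decide) (by decide) hy

theorem SmallRun.neverHead {R : List ℕ} (h : SmallRun R) : NeverHead 4 R := by
  intro n
  have : SmallRun (JHC^[n] R) := by
    induction n with
    | zero => exact h
    | succ n ih => rw [Function.iterate_succ_apply']; exact ih.step
  generalize JHC^[n] R = S at this
  cases this <;> simp <;> omega

/-! ### Reduction to letters at most 4 -/

/-- `Tame x k l`: in the string `xᵏ ++ l` (with `k` letters of its first run already read)
every run has length at most three and no two adjacent letters are both at least four. -/
def Tame (x k : ℕ) : List ℕ → Prop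
  | [] => k ≤ 3
  | y :: l => if y = x then x ≤ 3 ∧ Tame x (k + 1) l
      else k ≤ 3 ∧ ¬ (4 ≤ x ∧ 4 ≤ y) ∧ Tame y 1 l

/-- The string has no run of length at least four and no two adjacent letters at least four. -/
def TameString : List ℕ → Prop
  | [] => True
  | x :: l => Tame x 1 l

theorem Tame.mono {l : List ℕ} : ∀ {x k j : ℕ}, Tame x k l → j ≤ k → Tame x j l := by
  induction l with
  | nil => intro x k j h hj; simp only [Tame] at h ⊢; omega
  | cons y l ih =>
    intro x k j h hj
    by_cases e : y = x
    · simp only [Tame, e, if_true] at h ⊢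
      exact ⟨h.1, ih h.2 (by omega)⟩
    · simp only [Tame, e, if_false] at h ⊢
      exact ⟨by omega, h.2⟩

theorem TameString.tail {x : ℕ} {l : List ℕ} (h : TameString (x :: l)) : TameString l := by
  rcases l with _ | ⟨y, l⟩
  · trivial
  · by_cases e : y = x
    · simp only [TameString, Tame, e, if_true] at h ⊢
      exact h.2.mono (by omega)
    · simp only [TameString, Tame, e, if_false] at h ⊢
      exact h.2.2

theorem TameString.suffix {R : List ℕ} (L : List ℕ) (h : TameString (L ++ R)) :
    TameString R := by
  induction L with
  | nil => exact h
  | cons x L ih => exact ih h.tail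

/-- Replace every letter above four by four. -/
def clamp (l : List ℕ) : List ℕ := l.map (min · 4)

theorem clamp_go {l : List ℕ} : ∀ {x k : ℕ}, Tame x k l →
    clamp (go x k l) = go (min x 4) k (clamp l) := by
  induction l with
  | nil =>
    intro x k h
    have : k ≤ 3 := h
    simp [clamp, go]; omega
  | cons y l ih =>
    intro x k h
    by_cases e : y = x
    · subst e
      simp only [Tame, if_true] at h
      simpa [clamp, go] using ih h.2
    · simp only [Tame, e, if_false] at h
      have e' : min y 4 ≠ min x 4 := by omega
      have := ih h.2.2
      simp only [clamp, go, e, if_false, List.map_cons, e'] at this ⊢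
      rw [this]
      congr 1
      omega

theorem clamp_JHC {l : List ℕ} (h : TameString l) : clamp (JHC l) = JHC (clamp l) := by
  rcases l with _ | ⟨x, l⟩
  · rfl
  · rw [JHC_cons, clamp_go h]
    simp [clamp, JHC_cons]

/-- The run-length pairs produced by `go`. -/
def pairs (x k : ℕ) : List ℕ → List (ℕ × ℕ)
  | [] => [(k, x)]
  | y :: l => if y = x then pairs x (k + 1) l else (k, x) :: pairs y 1 l

/-- Write out a list of pairs as a string. -/
def flat : List (ℕ × ℕ) → List ℕ
  | [] => []
  | p :: ps => p.1 :: p.2 :: flat ps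

/-- Consecutive letters differ; `a` is the letter of the preceding pair. -/
def Alternating (a : ℕ) : List (ℕ × ℕ) → Prop
  | [] => True
  | p :: ps => p.2 ≠ a ∧ Alternating p.2 ps

theorem go_eq_flat (l : List ℕ) : ∀ x k, go x k l = flat (pairs x k l) := by
  induction l with
  | nil => intro x k; rfl
  | cons y l ih =>
    intro x k
    by_cases e : y = x
    · simp [go, pairs, e, ih]
    · simp [go, pairs, e, ih, flat]

theorem pairs_alternating (l : List ℕ) : ∀ x k a, x ≠ a → Alternating a (pairs x k l) := by
  induction l with
  | nil => intro x k a h; exact ⟨h, trivial⟩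
  | cons y l ih =>
    intro x k a h
    by_cases e : y = x
    · simpa [pairs, e] using ih x (k + 1) a h
    · simp only [pairs, e, if_false]
      exact ⟨h, ih y 1 x e⟩

theorem pairs_count_le (l : List ℕ) : ∀ x k, Tame x k l → ∀ p ∈ pairs x k l, p.1 ≤ 3 := by
  induction l with
  | nil => intro x k h p hp; simp only [pairs, List.mem_singleton] at hp; subst hp; exact h
  | cons y l ih =>
    intro x k h
    by_cases e : y = x
    · simp only [Tame, pairs, e, if_true] at h ⊢
      exact ih x (k + 1) h.2
    · simp only [Tame, pairs, e, if_false] at h ⊢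
      intro p hp
      rcases List.mem_cons.1 hp with rfl | hp
      · exact h.1
      · exact ih y 1 h.2.2 p hp

theorem pairs_letter (P : ℕ → Prop) (l : List ℕ) : ∀ x k, P x → (∀ y ∈ l, P y) →
    ∀ p ∈ pairs x k l, P p.2 := by
  induction l with
  | nil => intro x k h _ p hp; simp only [pairs, List.mem_singleton] at hp; subst hp; exact h
  | cons y l ih =>
    intro x k h hl
    have hl' : ∀ z ∈ l, P z := fun z hz => hl z (by simp [hz])
    by_cases e : y = x
    · simp only [pairs, e, if_true]
      exact ih x (k + 1) h hl'
    · simp only [pairs, e, if_false]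
      intro p hp
      rcases List.mem_cons.1 hp with rfl | hp
      · exact h
      · exact ih y 1 (hl y (by simp)) hl' p hp

theorem pairs_count_pos (l : List ℕ) : ∀ x k, 1 ≤ k → ∀ p ∈ pairs x k l, 1 ≤ p.1 := by
  induction l with
  | nil => intro x k h p hp; simp only [pairs, List.mem_singleton] at hp; subst hp; exact h
  | cons y l ih =>
    intro x k h
    by_cases e : y = x
    · simp only [pairs, e, if_true]
      exact ih x (k + 1) (by omega)
    · simp only [pairs, e, if_false]
      intro p hp
      rcases List.mem_cons.1 hp with rfl | hp
      · exact h
      · exact ih y 1 le_rfl p hp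

/-- All counts are at most three, or all letters are. -/
def SmallPairs (ps : List (ℕ × ℕ)) : Prop := (∀ p ∈ ps, p.1 ≤ 3) ∨ ∀ p ∈ ps, p.2 ≤ 3

theorem SmallPairs.tail {p : ℕ × ℕ} {ps : List (ℕ × ℕ)} (h : SmallPairs (p :: ps)) :
    SmallPairs ps :=
  h.imp (fun h q hq => h q (by simp [hq])) (fun h q hq => h q (by simp [hq]))

/-- After a pair with letter `a`, the current run of `a` has length `j ≤ 2`. -/
theorem tame_flat (ps : List (ℕ × ℕ)) : ∀ m a j, j ≤ 2 → SmallPairs ((m, a) :: ps) →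
    Alternating a ps → Tame a j (flat ps) := by
  induction ps with
  | nil => intro m a j hj _ _; simp only [flat, Tame]; omega
  | cons p ps ih =>
    obtain ⟨n, b⟩ := p
    intro m a j hj hs ha
    obtain ⟨hba, hc⟩ := ha
    simp only at hba hc
    have ih1 := ih n b 1 (by omega) hs.tail hc
    have ih2 := ih n b 2 (by omega) hs.tail hc
    have hs' : (m ≤ 3 ∧ n ≤ 3) ∨ (a ≤ 3 ∧ b ≤ 3) := by
      rcases hs with hs | hs
      · exact Or.inl ⟨hs (m, a) (by simp), hs (n, b) (by simp)⟩
      · exact Or.inr ⟨hs (m, a) (by simp), hs (n, b) (by simp)⟩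
    simp only [flat, Tame]
    split_ifs with h1 h2
    · exact ⟨by omega, by omega, by omega, ih1⟩
    · exact ⟨by omega, by omega, by omega, h2 ▸ ih2⟩
    · exact ⟨by omega, by omega, by omega, by omega, ih1⟩

theorem tameString_flat (ps : List (ℕ × ℕ)) (a : ℕ) (hs : SmallPairs ps)
    (ha : Alternating a ps) : TameString (flat ps) := by
  rcases ps with _ | ⟨⟨n, b⟩, ps⟩
  · trivial
  have h1 := tame_flat ps n b 1 (by omega) hs ha.2
  have h2 := tame_flat ps n b 2 (by omega) hs ha.2
  have hs' : n ≤ 3 ∨ b ≤ 3 :=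
    hs.imp (fun h => h (n, b) (by simp)) (fun h => h (n, b) (by simp))
  simp only [flat, TameString, Tame]
  split_ifs with h
  · exact ⟨by omega, h ▸ h2⟩
  · exact ⟨by omega, by omega, h1⟩

theorem TameString.step {l : List ℕ} (h : TameString l) : TameString (JHC l) := by
  rcases l with _ | ⟨x, l⟩
  · trivial
  · rw [JHC_cons, go_eq_flat]
    exact tameString_flat _ (x + 1) (Or.inl (pairs_count_le l x 1 h))
      (pairs_alternating l x 1 _ (by omega))

theorem TameString.iter {l : List ℕ} (h : TameString l) (n : ℕ) : TameString (JHC^[n] l) := by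
  induction n with
  | zero => exact h
  | succ n ih => rw [Function.iterate_succ_apply']; exact ih.step

theorem clamp_iter {l : List ℕ} (h : TameString l) (n : ℕ) :
    clamp (JHC^[n] l) = JHC^[n] (clamp l) := by
  induction n with
  | zero => rfl
  | succ n ih =>
    rw [Function.iterate_succ_apply', Function.iterate_succ_apply', clamp_JHC (h.iter n), ih]

/-- Cuts of the clamped string are cuts of the string. -/
theorem Cut.of_clamp {L R : List ℕ} (hR : TameString R) (h : Cut (clamp L) (clamp R)) :
    Cut L R := by
  obtain ⟨hne, l', hl', hn⟩ := h
  refine ⟨by rintro rfl; exact hne rfl, ?_⟩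
  rw [clamp, List.getLast?_map, Option.map_eq_some_iff] at hl'
  obtain ⟨l, hl, rfl⟩ := hl'
  refine ⟨l, hl, fun n h => hn n ?_⟩
  rw [← clamp_iter hR, clamp, List.head?_map, h]; rfl

/-! ### Automata and the cascade of scanners -/

local notation "BIF" b:max "THEN" t "ELSE" e => Bool.rec (motive := fun _ => Bool) e t b
local notation "NIF" b:max "THEN" t "ELSE" e => Bool.rec (motive := fun _ => ℕ) e t b

/-- A partial deterministic automaton over the letters `1, …, 4` is a function `σ`, where
`σ z a = z' + 1` is a transition from `z` to `z'`, `σ z a = 0` means that there is none, and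
`σ z 0 ≠ 0` means that `z` is accepting. `Accepts σ z l` says that `l` is accepted from `z`. -/
def Accepts (σ : ℕ → ℕ → ℕ) (z : ℕ) : List ℕ → Prop
  | [] => σ z 0 ≠ 0
  | a :: l => 1 ≤ a ∧ a ≤ 4 ∧ ∃ z', σ z a = z' + 1 ∧ Accepts σ z' l

/-- Current runs `yᵏ` of a cascade of look-and-say scanners, each reading the output of the
previous one; `k = 0` marks a scanner that has not read anything. -/
inductive Stages
  | nil
  | cons (k y : ℕ) (s : Stages)

/-- What a scanner with current run `yᵏ` outputs on the complete remaining input `Q`. -/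
def stageOut (k y : ℕ) (Q : List ℕ) : List ℕ := if k = 0 then JHC Q else go y k Q

/-- What a cascade outputs on the complete remaining input `Q`. -/
def Stages.out : Stages → List ℕ → List ℕ
  | .nil, Q => Q
  | .cons k y s, Q => s.out (stageOut k y Q)

/-- The cascade of `n` scanners that have not read anything. -/
def Stages.fresh : ℕ → Stages
  | 0 => .nil
  | n + 1 => .cons 0 0 (fresh n)

theorem Stages.fresh_out (n : ℕ) : ∀ Q, (fresh n).out Q = JHC^[n] Q := by
  induction n with
  | zero => intro Q; rfl
  | succ n ih => intro Q; simp [fresh, out, stageOut, ih]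

/-- Run one scanner on `l`; the continuation gets the new run and the output. -/
noncomputable def scan (l : List ℕ) : ℕ → ℕ → (ℕ → ℕ → List ℕ → Bool) → Bool :=
  List.rec (motive := fun _ => ℕ → ℕ → (ℕ → ℕ → List ℕ → Bool) → Bool)
    (fun k y K => K k y [])
    (fun a _ ih k y K => BIF (Nat.beq a y) THEN ih (Nat.succ k) y K ELSE
      Nat.rec (motive := fun _ => Bool) (ih 1 a K)
        (fun _ _ => ih 1 a fun k' y' o => K k' y' (k :: y :: o)) k) l

/-- Run a cascade on `l`; the continuation gets the new cascade and the output. -/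
noncomputable def cascade (s : Stages) : List ℕ → (Stages → List ℕ → Bool) → Bool :=
  Stages.rec (motive := fun _ => List ℕ → (Stages → List ℕ → Bool) → Bool)
    (fun l K => K .nil l)
    (fun k y _ ih l K =>
      scan l k y fun k' y' o => ih o fun s' o' => K (.cons k' y' s') o') s

/-- Run a cascade on the final piece `l` of the input. -/
noncomputable def flush (s : Stages) : List ℕ → (List ℕ → Bool) → Bool :=
  Stages.rec (motive := fun _ => List ℕ → (List ℕ → Bool) → Bool)
    (fun l K => K l)
    (fun k y _ ih l K => scan l k y fun k' y' o =>
      Nat.rec (motive := fun _ => Bool) (ih o K) (fun _ _ => ih (o ++ [k', y']) K) k') s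

/-- Run an automaton on `l`; the result is `false` if it gets stuck. -/
noncomputable def feed (σ : ℕ → ℕ → ℕ) (l : List ℕ) : ℕ → (ℕ → Bool) → Bool :=
  List.rec (motive := fun _ => ℕ → (ℕ → Bool) → Bool)
    (fun z K => K z)
    (fun a _ ih z K => BIF (Nat.ble 1 a) THEN BIF (Nat.ble a 4) THEN
      Nat.rec (motive := fun _ => Bool) false (fun z' _ => ih z' K) (σ z a)
      ELSE false ELSE false) l

theorem scan_spec (l : List ℕ) : ∀ k y, ∃ k' y' o, (∀ K, scan l k y K = K k' y' o) ∧
    ∀ Q, stageOut k y (l ++ Q) = o ++ stageOut k' y' Q := by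
  induction l with
  | nil => intro k y; exact ⟨k, y, [], fun _ => rfl, fun _ => rfl⟩
  | cons a l ih =>
    intro k y
    by_cases e : a = y
    · subst e
      obtain ⟨k', y', o, h1, h2⟩ := ih (k + 1) a
      refine ⟨k', y', o, fun K => ?_, fun Q => ?_⟩
      · rw [← h1 K]
        have : Nat.beq a a = true := Nat.beq_refl a
        change (BIF (Nat.beq a a) THEN scan l (k + 1) a K ELSE _) = _
        rw [this]
      · rw [← h2]
        by_cases hk : k = 0
        · simp [stageOut, hk, JHC_cons]
        · simp [stageOut, hk, go]
    · have hb : Nat.beq a y = false := by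
        rw [← Bool.not_eq_true]; exact fun h => e (Nat.eq_of_beq_eq_true h)
      obtain ⟨k', y', o, h1, h2⟩ := ih 1 a
      rcases k with _ | k
      · refine ⟨k', y', o, fun K => ?_, fun Q => ?_⟩
        · rw [← h1 K]
          change (BIF (Nat.beq a y) THEN _ ELSE scan l 1 a K) = _
          rw [hb]
        · rw [← h2]; simp [stageOut, JHC_cons]
      · refine ⟨k', y', (k + 1) :: y :: o, fun K => ?_, fun Q => ?_⟩
        · rw [← h1 fun k' y' o => K k' y' ((k + 1) :: y :: o)]
          change (BIF (Nat.beq a y) THEN _ ELSE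
            scan l 1 a fun k' y' o => K k' y' ((k + 1) :: y :: o)) = _
          rw [hb]
        · have := h2 Q
          simp only [stageOut, one_ne_zero, if_false] at this
          simp [stageOut, go, e, this]

theorem cascade_spec (s : Stages) : ∀ l, ∃ s' o, (∀ K, cascade s l K = K s' o) ∧
    ∀ Q, s.out (l ++ Q) = o ++ s'.out Q := by
  induction s with
  | nil => intro l; exact ⟨.nil, l, fun _ => rfl, fun _ => rfl⟩
  | cons k y s ih =>
    intro l
    obtain ⟨k', y', o, h1, h2⟩ := scan_spec l k y
    obtain ⟨s', o', h3, h4⟩ := ih o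
    refine ⟨.cons k' y' s', o', fun K => ?_, fun Q => ?_⟩
    · change scan l k y (fun k' y' o => cascade s o fun s' o' => K (.cons k' y' s') o') = _
      rw [h1, h3]
    · simp only [Stages.out, h2, h4]

theorem flush_spec (s : Stages) : ∀ l K, flush s l K = K (s.out l) := by
  induction s with
  | nil => intro l K; rfl
  | cons k y s ih =>
    intro l K
    obtain ⟨k', y', o, h1, h2⟩ := scan_spec l k y
    change scan l k y (fun k' y' o => Nat.rec (motive := fun _ => Bool) (flush s o K)
      (fun _ _ => flush s (o ++ [k', y']) K) k') = _
    have h2 := h2 []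
    rw [List.append_nil] at h2
    rw [h1, Stages.out, h2]
    rcases k' with _ | k'
    · simp [stageOut, JHC_nil, ih]
    · simp [stageOut, go, ih]

theorem feed_spec (σ : ℕ → ℕ → ℕ) (l : List ℕ) : ∀ z K, feed σ l z K = true →
    ∃ z', K z' = true ∧ ∀ Q, Accepts σ z' Q → Accepts σ z (l ++ Q) := by
  induction l with
  | nil => intro z K h; exact ⟨z, h, fun _ h => h⟩
  | cons a l ih =>
    intro z K h
    change (BIF (Nat.ble 1 a) THEN BIF (Nat.ble a 4) THEN
      Nat.rec (motive := fun _ => Bool) false (fun z' _ => feed σ l z' K) (σ z a)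
      ELSE false ELSE false) = true at h
    rcases h1 : Nat.ble 1 a with _ | _
    · simp [h1] at h
    rcases h2 : Nat.ble a 4 with _ | _
    · simp [h1, h2] at h
    rw [h1, h2] at h
    rcases h3 : σ z a with _ | z1
    · rw [h3] at h; exact absurd (show false = true from h) (by decide)
    · rw [h3] at h
      obtain ⟨z', hK, hz⟩ := ih z1 K h
      exact ⟨z', hK, fun Q hQ => ⟨Nat.le_of_ble_eq_true h1, Nat.le_of_ble_eq_true h2, z1, h3,
        hz Q hQ⟩⟩

/-! ### Exhaustive search -/

/-- A state of the search: `q` for the automaton reading the input of the cascade `s`, and `z`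
for the automaton reading its output. -/
structure State where
  q : ℕ
  z : ℕ
  s : Stages

/-- Visited states in a binary tree, at nodes that carry a numerical search key. -/
inductive Visited
  | leaf
  | node (n : ℕ) (x : State) (l r : Visited)

def Visited.Mem (y : State) : Visited → Prop
  | .leaf => False
  | .node _ x l r => y = x ∨ l.Mem y ∨ r.Mem y

def Stages.beq : Stages → Stages → Bool
  | .nil, .nil => true
  | .cons k y s, .cons k' y' s' => and (Nat.beq k k') (and (Nat.beq y y') (beq s s'))
  | _, _ => false

def State.beq : State → State → Bool
  | ⟨q, z, s⟩, ⟨q', z', s'⟩ => and (Nat.beq q q') (and (Nat.beq z z') (s.beq s'))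

theorem Stages.eq_of_beq : ∀ {s t : Stages}, s.beq t = true → s = t
  | .nil, .nil, _ => rfl
  | .cons k y s, .cons k' y' t, h => by
    simp only [Stages.beq, Bool.and_eq_true] at h
    rw [Nat.eq_of_beq_eq_true h.1, Nat.eq_of_beq_eq_true h.2.1, eq_of_beq h.2.2]
  | .nil, .cons _ _ _, h => absurd h (by simp [Stages.beq])
  | .cons _ _ _, .nil, h => absurd h (by simp [Stages.beq])

theorem State.eq_of_beq {x y : State} (h : x.beq y = true) : x = y := by
  obtain ⟨q, z, s⟩ := x
  obtain ⟨q', z', s'⟩ := y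
  simp only [State.beq, Bool.and_eq_true] at h
  rw [Nat.eq_of_beq_eq_true h.1, Nat.eq_of_beq_eq_true h.2.1, Stages.eq_of_beq h.2.2]

/-- Append the base-8 digits of the stages to the number `n`, giving a search key. The case
distinction on the result forces its evaluation. -/
noncomputable def key (s : Stages) : ℕ → (ℕ → Bool) → Bool :=
  Stages.rec (motive := fun _ => ℕ → (ℕ → Bool) → Bool)
    (fun n K => Nat.rec (motive := fun _ => Bool) false (fun n _ => K n) n)
    (fun k y _ ih n K => ih (Nat.add (Nat.mul (Nat.add (Nat.mul n 8) k) 8) y) K) s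

/-- Insert `x` with key `n` and continue with `K`, or with `F` if `x` is already there. -/
noncomputable def Visited.insert (t : Visited) :
    ℕ → State → (Visited → Bool) → Bool → Bool :=
  Visited.rec (motive := fun _ => ℕ → State → (Visited → Bool) → Bool → Bool)
    (fun n x K _ => K (.node n x .leaf .leaf))
    (fun n' x' l r ihl ihr n x K F =>
      BIF (Nat.blt n n') THEN ihl n x (fun l' => K (.node n' x' l' r)) F ELSE
      BIF (Nat.beq n n') THEN (BIF (x.beq x') THEN F ELSE false) ELSE
      ihr n x (fun r' => K (.node n' x' l r')) F) t

/-- Put the successors of `x` under the letters `l` on the list `w` of states to be visited. -/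
noncomputable def succs (δ σ : ℕ → ℕ → ℕ) (x : State) (l : List ℕ) :
    List State → (List State → Bool) → Bool :=
  List.rec (motive := fun _ => List State → (List State → Bool) → Bool)
    (fun w K => K w)
    (fun a _ ih w K => Nat.rec (motive := fun _ => Bool) (ih w K)
      (fun q' _ => cascade x.s [a] fun s' o => feed σ o x.z fun z' => ih (⟨q', z', s'⟩ :: w) K)
      (δ x.q a)) l

/-- If the input may end in state `x`, then the complete output is accepted. -/
noncomputable def final (δ σ : ℕ → ℕ → ℕ) (x : State) : Bool :=
  Nat.rec (motive := fun _ => Bool) true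
    (fun _ _ => flush x.s [] fun o => feed σ o x.z fun z' => Nat.blt 0 (σ z' 0)) (δ x.q 0)

/-- Depth-first search with list `w` of states to be visited and visited states `t`. -/
noncomputable def search (δ σ : ℕ → ℕ → ℕ) (fuel : ℕ) : List State → Visited → Bool :=
  Nat.rec (motive := fun _ => List State → Visited → Bool) (fun _ _ => false)
    (fun _ ih w t => List.rec (motive := fun _ => Bool) true
      (fun x w' _ => key x.s (Nat.add (Nat.mul x.z 256) (Nat.add x.q 1)) fun n => t.insert n x
        (fun t' => BIF (final δ σ x) THEN succs δ σ x [1, 2, 3, 4] w' (fun w' => ih w' t')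
          ELSE false)
        (ih w' t)) w) fuel

theorem key_spec (s : Stages) : ∀ n K, key s n K = true → ∃ m, K m = true := by
  induction s with
  | nil =>
    intro n K h
    rcases n with _ | n
    · exact absurd h (by simp [key])
    · exact ⟨n, h⟩
  | cons k y s ih => intro n K h; exact ih _ K h

theorem Visited.insert_spec (t : Visited) : ∀ n x K F, t.insert n x K F = true →
    (t.Mem x ∧ F = true) ∨ ∃ t' : Visited, K t' = true ∧ t'.Mem x ∧ (∀ y, t.Mem y → t'.Mem y) ∧
      ∀ y, t'.Mem y → y = x ∨ t.Mem y := by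
  induction t with
  | leaf =>
    intro n x K F h
    exact Or.inr ⟨_, h, Or.inl rfl, fun _ h => h.elim, fun y hy => by
      simpa [Visited.Mem] using hy⟩
  | node n' x' l r ihl ihr =>
    intro n x K F h
    change (BIF (Nat.blt n n') THEN l.insert n x (fun l' => K (.node n' x' l' r)) F ELSE
      BIF (Nat.beq n n') THEN (BIF (x.beq x') THEN F ELSE false) ELSE
      r.insert n x (fun r' => K (.node n' x' l r')) F) = true at h
    rcases h1 : Nat.blt n n' with _ | _
    · rw [h1] at h
      rcases h2 : Nat.beq n n' with _ | _
      · rw [h2] at h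
        rcases ihr _ _ _ _ h with ⟨hx, hF⟩ | ⟨t', hK, hx, hsub, hsup⟩
        · exact Or.inl ⟨Or.inr (Or.inr hx), hF⟩
        · refine Or.inr ⟨_, hK, Or.inr (Or.inr hx), ?_, ?_⟩
          · rintro y (hy | hy | hy)
            exacts [Or.inl hy, Or.inr (Or.inl hy), Or.inr (Or.inr (hsub y hy))]
          · rintro y (hy | hy | hy)
            · exact Or.inr (Or.inl hy)
            · exact Or.inr (Or.inr (Or.inl hy))
            · exact (hsup y hy).imp id fun h => Or.inr (Or.inr h)
      · rw [h2] at h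
        rcases h3 : x.beq x' with _ | _
        · rw [h3] at h; exact absurd (show false = true from h) (by decide)
        · rw [h3] at h
          exact Or.inl ⟨Or.inl (State.eq_of_beq h3), h⟩
    · rw [h1] at h
      rcases ihl _ _ _ _ h with ⟨hx, hF⟩ | ⟨t', hK, hx, hsub, hsup⟩
      · exact Or.inl ⟨Or.inr (Or.inl hx), hF⟩
      · refine Or.inr ⟨_, hK, Or.inr (Or.inl hx), ?_, ?_⟩
        · rintro y (hy | hy | hy)
          exacts [Or.inl hy, Or.inr (Or.inl (hsub y hy)), Or.inr (Or.inr hy)]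
        · rintro y (hy | hy | hy)
          · exact Or.inr (Or.inl hy)
          · exact (hsup y hy).imp id fun h => Or.inr (Or.inl h)
          · exact Or.inr (Or.inr (Or.inr hy))

/-- The part of the simulation at `x` that concerns the letter `a`: some state of `V` takes over
after reading `a`. -/
def Simulates (δ σ : ℕ → ℕ → ℕ) (V : State → Prop) (x : State) (a : ℕ) : Prop :=
  ∀ q', δ x.q a = q' + 1 → ∃ z' s', V ⟨q', z', s'⟩ ∧
    ∀ Q, Accepts σ z' (s'.out Q) → Accepts σ x.z (x.s.out (a :: Q))

/-- A state at which the simulation by states in `V` continues. -/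
def Sound (δ σ : ℕ → ℕ → ℕ) (V : State → Prop) (x : State) : Prop :=
  final δ σ x = true ∧ ∀ a, 1 ≤ a → a ≤ 4 → Simulates δ σ V x a

theorem succs_spec (δ σ : ℕ → ℕ → ℕ) (x : State) (l : List ℕ) : ∀ w K,
    succs δ σ x l w K = true → ∃ w', K w' = true ∧ (∀ y ∈ w, y ∈ w') ∧
      ∀ a ∈ l, Simulates δ σ (· ∈ w') x a := by
  induction l with
  | nil => intro w K h; exact ⟨w, h, fun _ h => h, by simp⟩
  | cons a l ih =>
    intro w K h
    change Nat.rec (motive := fun _ => Bool) (succs δ σ x l w K)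
      (fun q' _ => cascade x.s [a] fun s' o => feed σ o x.z fun z' =>
        succs δ σ x l (⟨q', z', s'⟩ :: w) K) (δ x.q a) = true at h
    rcases hd : δ x.q a with _ | q'
    · rw [hd] at h
      obtain ⟨w', hK, hw, hl⟩ := ih w K h
      refine ⟨w', hK, hw, ?_⟩
      intro b hb
      rcases List.mem_cons.1 hb with rfl | hb
      · intro q' hq'; omega
      · exact hl b hb
    · rw [hd] at h
      obtain ⟨s', o, h1, h2⟩ := cascade_spec x.s [a]
      change cascade x.s [a] (fun s' o => feed σ o x.z fun z' =>
        succs δ σ x l (⟨q', z', s'⟩ :: w) K) = true at h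
      rw [h1] at h
      obtain ⟨z', h3, h4⟩ := feed_spec _ _ _ _ h
      obtain ⟨w', hK, hw, hl⟩ := ih _ K h3
      refine ⟨w', hK, fun y hy => hw y (by simp [hy]), ?_⟩
      intro b hb
      rcases List.mem_cons.1 hb with rfl | hb
      · intro q'' hq''
        obtain rfl : q' = q'' := by omega
        refine ⟨z', s', hw _ (by simp), fun Q hQ => ?_⟩
        have := h2 Q
        rw [List.singleton_append] at this
        rw [this]
        exact h4 _ hQ
      · exact hl b hb

theorem Simulates.mono {δ σ : ℕ → ℕ → ℕ} {V V' : State → Prop} (hV : ∀ y, V y → V' y)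
    {x : State} {a : ℕ} (h : Simulates δ σ V x a) : Simulates δ σ V' x a := by
  intro q' hq'
  obtain ⟨z', s', h1, h2⟩ := h q' hq'
  exact ⟨z', s', hV _ h1, h2⟩

/-- A successful search yields a set of states that contains all states found so far and is sound
outside the states visited before. -/
theorem search_spec (δ σ : ℕ → ℕ → ℕ) (fuel : ℕ) : ∀ w t, search δ σ fuel w t = true →
    ∃ V : State → Prop, (∀ y ∈ w, V y) ∧ (∀ y, t.Mem y → V y) ∧
      ∀ y, V y → t.Mem y ∨ Sound δ σ V y := by
  induction fuel with
  | zero => intro w t h; exact absurd h (by simp [search])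
  | succ fuel ih =>
    intro w t h
    rcases w with _ | ⟨x, w⟩
    · exact ⟨fun y => t.Mem y, by simp, fun _ h => h, fun _ h => Or.inl h⟩
    change key x.s (Nat.add (Nat.mul x.z 256) (Nat.add x.q 1)) (fun n => t.insert n x
        (fun t' => BIF (final δ σ x) THEN
          succs δ σ x [1, 2, 3, 4] w (fun w' => search δ σ fuel w' t') ELSE false)
        (search δ σ fuel w t)) = true at h
    obtain ⟨n, hn⟩ := key_spec _ _ _ h
    rcases Visited.insert_spec _ _ _ _ _ hn with ⟨hx, h⟩ | ⟨t', h, hx, hsub, hsup⟩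
    · obtain ⟨V, h1, h2, h3⟩ := ih _ _ h
      refine ⟨V, ?_, h2, h3⟩
      intro y hy
      rcases List.mem_cons.1 hy with rfl | hy
      · exact h2 _ hx
      · exact h1 y hy
    · rcases hf : final δ σ x with _ | _
      · simp [hf] at h
      rw [hf] at h
      obtain ⟨w', hw', hw, hs⟩ := succs_spec _ _ _ _ _ _ h
      obtain ⟨V, h1, h2, h3⟩ := ih _ _ hw'
      refine ⟨V, ?_, fun y hy => h2 y (hsub y hy), ?_⟩
      · intro y hy
        rcases List.mem_cons.1 hy with rfl | hy
        · exact h2 _ hx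
        · exact h1 y (hw y hy)
      · intro y hy
        rcases h3 y hy with hy | hy
        · rcases hsup y hy with rfl | hy
          · refine Or.inr ⟨hf, fun a ha ha' => (hs a ?_).mono h1⟩
            have : a = 1 ∨ a = 2 ∨ a = 3 ∨ a = 4 := by omega
            simpa using this
          · exact Or.inl hy
        · exact Or.inr hy

theorem accepts_out {δ σ : ℕ → ℕ → ℕ} {V : State → Prop} (hV : ∀ y, V y → Sound δ σ V y)
    (l : List ℕ) : ∀ x, V x → Accepts δ x.q l → Accepts σ x.z (x.s.out l) := by
  induction l with
  | nil =>
    intro x hx hl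
    have hf := (hV x hx).1
    unfold final at hf
    rcases hd : δ x.q 0 with _ | d
    · exact absurd hd hl
    rw [hd] at hf
    change flush x.s [] (fun o => feed σ o x.z fun z' => Nat.blt 0 (σ z' 0)) = true at hf
    rw [flush_spec] at hf
    obtain ⟨z', h1, h2⟩ := feed_spec _ _ _ _ hf
    have h1 : 0 < σ z' 0 := Nat.le_of_ble_eq_true h1
    have := h2 [] (by change σ z' 0 ≠ 0; omega)
    rwa [List.append_nil] at this
  | cons a l ih =>
    rintro x hx ⟨h1, h4, q', hq', hl⟩
    obtain ⟨z', s', hx', h⟩ := (hV x hx).2 a h1 h4 q' hq'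
    exact h l (ih _ hx' hl)

/-- A successful search from the initial states proves that `n`-fold iteration maps strings
accepted by `δ` to strings accepted by `σ`. -/
theorem accepts_iter {δ σ : ℕ → ℕ → ℕ} {n fuel : ℕ}
    (h : search δ σ fuel [⟨0, 0, Stages.fresh n⟩] .leaf = true) {l : List ℕ}
    (hl : Accepts δ 0 l) : Accepts σ 0 (JHC^[n] l) := by
  obtain ⟨V, h1, -, h3⟩ := search_spec _ _ _ _ _ h
  have := accepts_out (fun y hy => (h3 y hy).resolve_left fun h => h) l
    ⟨0, 0, Stages.fresh n⟩ (h1 _ (by simp)) hl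
  rwa [Stages.fresh_out] at this

/-! ### The three automata -/

/-- Automaton for day-one strings `m₁ a₁ m₂ a₂ …` with `aᵢ ≤ 3` and `aᵢ ≠ aᵢ₊₁`. In state `y ≤ 3`
a count is expected and in state `y + 4` a letter, where `y` is the previous letter
(`0` at the start). -/
noncomputable def dayOne (q a : ℕ) : ℕ :=
  NIF (Nat.ble 4 q) THEN
    NIF (Nat.beq (Nat.add a 4) q) THEN 0 ELSE NIF (Nat.beq a 0) THEN 0 ELSE
    NIF (Nat.ble a 3) THEN Nat.succ a ELSE 0
  ELSE NIF (Nat.beq a 0) THEN 1 ELSE Nat.add q 5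

/-- Transition table of an automaton with 131 states that accepts all clamped day-four strings: byte
number `5 * q + a` is the value at state `q` and letter `a`. One gets it by determinizing and
minimizing the image of `dayOne` under three steps of the operator, but the only property in use is
the inclusion verified in `search_dayOne_dayFour`. -/
def dayFourTable : ℕ :=
  1186627513796858619847454975956575817414149333651685979712007253472073633489632403806459296794658290227781784516899514196556649492957189926848429129146304518908935003631079048824271825058964983327005170410667939971284547350628265313483545866283560606628715255728824428234821971763298340386252501938703697617579884078746100485125227993199949756287357104489016955306237262060012080804470130737854840808863173488440532570370629737796885139450957012237751855740520211724788574620278303464156691041090034250216944009703004497917759911205586428066372466421231184721131160777253587551006753529444825176084169037065630391580541132478530140059349752113796582798872857671079067518175048965595227471285976276454574072735555427061047901781424984558726664824713479825607994481490871435180473285688879184428650900962753009168524262129139728017084636487172504402678728057953157326502162184799142953256148093813075261128789076058672941257871857827595228949736556736356844330582683203395942537854450500849685191530935055445037677315244968369794694340440851434493858067181081224006780931457438413876779042382384318322171100103419600282119648578726502329664271753945502568880726241330190208456335057238258014261965039537844249823631191259202451766506911163818211859500374223471108851316072610996334558355978994670902038692531801666379509501400691224967735170443536340576526081719612382136901573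81755165033216524721154352816986068695905063067964754574589147159598697532088439316247082192279072753346851029116472434989584255102555562269951788769788265895070448366522931999228829788552418637840897

/-- The automaton given by `dayFourTable`. -/
def dayFour (q a : ℕ) : ℕ :=
  Nat.mod (Nat.shiftRight dayFourTable (Nat.mul 8 (Nat.add (Nat.mul 5 q) a))) 256

/-- New state of `gap` after reading `a` when no cut is found: the counter, which may not exceed
80, goes up. -/
noncomputable def keep (z a : ℕ) : ℕ :=
  NIF (Nat.ble 327680 z) THEN 0 ELSE
  Nat.succ (Nat.add (Nat.mul 4096 (Nat.succ (Nat.div z 4096)))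
    (Nat.add (Nat.mul 8 (Nat.mod z 512)) a))

/-- New state of `gap` after reading `a` when a cut is found `g` letters back. -/
def reset (g z a : ℕ) : ℕ :=
  Nat.succ (Nat.add (Nat.mul 4096 g) (Nat.add (Nat.mul 8 (Nat.mod z 512)) a))

/-- Search for a cut `2.ClassA` or `4.SmallRun` that is completed by a letter `a ≠ p₁`, where
`…p₄p₃p₂p₁` has been read. -/
noncomputable def gapAux (z a p₁ p₂ p₃ p₄ : ℕ) : ℕ :=
  NIF (Nat.beq p₁ 4) THEN keep z a ELSE
  NIF (Nat.beq p₂ 4) THEN reset 2 z a ELSE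
  NIF (Nat.beq p₂ p₁) THEN
    (NIF (Nat.beq p₃ p₁) THEN
      (NIF (Nat.beq p₄ 4) THEN reset 4 z a ELSE
       NIF (and (Nat.beq p₄ 2) (Nat.beq p₁ 1)) THEN reset 4 z a ELSE keep z a)
     ELSE NIF (Nat.beq p₃ 4) THEN reset 3 z a ELSE
      NIF (and (Nat.beq p₃ 3) (Nat.beq p₄ 2)) THEN reset 4 z a ELSE keep z a)
  ELSE NIF (Nat.beq p₃ 2) THEN (NIF (Nat.beq p₂ 2) THEN keep z a ELSE reset 3 z a)
  ELSE keep z a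

/-- Automaton that gets stuck when it sees no cut in a string for too long. Its states have the
form `z = 4096 g + 512 p₄ + 64 p₃ + 8 p₂ + p₁`, with the last four letters `p₄ p₃ p₂ p₁` read and a
counter `g` for the letters after the last cut. -/
noncomputable def gap (z a : ℕ) : ℕ :=
  NIF (Nat.beq a 0) THEN 1 ELSE
  NIF (Nat.beq a (Nat.mod z 8)) THEN keep z a ELSE
  gapAux z a (Nat.mod z 8) (Nat.mod (Nat.div z 8) 8) (Nat.mod (Nat.div z 64) 8)
    (Nat.mod (Nat.div z 512) 8)

theorem search_dayOne_dayFour :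
    search dayOne dayFour 100000 [⟨0, 0, Stages.fresh 3⟩] .leaf = true := by
  decide +kernel

theorem search_dayFour_gap :
    search dayFour gap 100000 [⟨0, 0, Stages.fresh 5⟩] .leaf = true := by
  decide +kernel

/-! ### Day-one strings -/

theorem nif_eq (b : Bool) (t e : ℕ) : (NIF b THEN t ELSE e) = if b = true then t else e := by
  cases b <;> rfl

theorem dayOne_eq (q a : ℕ) : dayOne q a =
    if 4 ≤ q then (if a + 4 = q then 0 else if a = 0 then 0 else if a ≤ 3 then a + 1 else 0)
    else if a = 0 then 1 else q + 5 := by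
  simp only [dayOne, nif_eq, Nat.beq_eq, Nat.ble_eq, Nat.add_eq, Nat.succ_eq_add_one]

theorem accepts_dayOne (ps : List (ℕ × ℕ)) : ∀ y, y ≤ 3 → Alternating y ps →
    (∀ p ∈ ps, 1 ≤ p.1) → (∀ p ∈ ps, 1 ≤ p.2 ∧ p.2 ≤ 3) →
    Accepts dayOne y (clamp (flat ps)) := by
  induction ps with
  | nil =>
    intro y hy _ _ _
    change dayOne y 0 ≠ 0
    rw [dayOne_eq]
    split_ifs <;> omega
  | cons p ps ih =>
    obtain ⟨m, a⟩ := p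
    rintro y hy ⟨ha, hps⟩ h1 h2
    have hm : 1 ≤ m := h1 (m, a) (by simp)
    have ha' : 1 ≤ a ∧ a ≤ 3 := h2 (m, a) (by simp)
    simp only at ha hps
    have := ih a ha'.2 hps (fun p hp => h1 p (by simp [hp])) (fun p hp => h2 p (by simp [hp]))
    have e : min a 4 = a := by omega
    change Accepts dayOne y (min m 4 :: min a 4 :: clamp (flat ps))
    rw [e]
    refine ⟨by omega, by omega, y + 4, ?_, by omega, by omega, a, ?_, this⟩
    · rw [dayOne_eq]
      split_ifs <;> omega
    · rw [dayOne_eq]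
      split_ifs <;> omega

/-- All that is needed about the first step: the output is accepted by `dayOne` and tame. -/
theorem day_one {w : List ℕ} (hw : ∀ x ∈ w, 1 ≤ x ∧ x ≤ 3) :
    Accepts dayOne 0 (clamp (JHC w)) ∧ TameString (JHC w) := by
  rcases w with _ | ⟨x, l⟩
  · refine ⟨?_, trivial⟩
    change dayOne 0 0 ≠ 0
    rw [dayOne_eq]
    decide
  have hx := hw x (by simp)
  have hl := pairs_letter (fun x => 1 ≤ x ∧ x ≤ 3) l x 1 hx fun y hy => hw y (by simp [hy])
  have ha := pairs_alternating l x 1 0 (by omega)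
  rw [JHC_cons, go_eq_flat]
  exact ⟨accepts_dayOne _ 0 (by omega) ha (pairs_count_pos l x 1 le_rfl) hl,
    tameString_flat _ 0 (Or.inr fun p hp => (hl p hp).2) ha⟩

/-! ### Soundness of the automaton `gap` -/

theorem keep_eq (z a : ℕ) : keep z a =
    if 327680 ≤ z then 0 else 4096 * (z / 4096 + 1) + (8 * (z % 512) + a) + 1 := by
  simp only [keep, nif_eq, Nat.ble_eq]
  rfl

theorem reset_eq (g z a : ℕ) : reset g z a = 4096 * g + (8 * (z % 512) + a) + 1 := rfl

theorem gap_eq (z a : ℕ) : gap z a = if a = 0 then 1 else if a = z % 8 then keep z a else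
    gapAux z a (z % 8) (z / 8 % 8) (z / 64 % 8) (z / 512 % 8) := by
  simp only [gap, nif_eq, Nat.beq_eq]
  rfl

/-- The last letters read are those of a cut, `r` letters before the end of the string. Here `a`
is the last letter, and `p₁, p₂, p₃, p₄` are the letters before it in reverse order. -/
def CutRule (r a p₁ p₂ p₃ p₄ : ℕ) : Prop :=
  a ≠ p₁ ∧ p₁ ≠ 4 ∧
    ((r = 2 ∧ p₂ = 4) ∨
     (r = 4 ∧ p₂ = p₁ ∧ p₃ = p₁ ∧ p₄ = 4) ∨
     (r = 4 ∧ p₂ = 1 ∧ p₁ = 1 ∧ p₃ = 1 ∧ p₄ = 2) ∨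
     (r = 3 ∧ p₂ = p₁ ∧ p₃ = 4) ∨
     (r = 4 ∧ p₂ = p₁ ∧ p₁ ≠ 3 ∧ p₃ = 3 ∧ p₄ = 2) ∨
     (r = 3 ∧ p₂ ≠ p₁ ∧ p₂ ≠ 4 ∧ p₂ ≠ 2 ∧ p₃ = 2))

theorem gapAux_spec {z a p₁ p₂ p₃ p₄ v : ℕ} (ha : a ≠ p₁)
    (h : gapAux z a p₁ p₂ p₃ p₄ = v) :
    keep z a = v ∨ ∃ r, reset r z a = v ∧ CutRule r a p₁ p₂ p₃ p₄ := by
  simp only [gapAux, nif_eq, Nat.beq_eq, Bool.and_eq_true] at h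
  generalize keep z a = K at *
  generalize reset = f at *
  split_ifs at h with h1 h2 h3 h4 h5 h6 h7 h8 h9 h10
  all_goals first
    | exact Or.inl h
    | refine Or.inr ⟨_, h, ha, h1, ?_⟩
      clear h
      grind

/-- The last four letters of a string that is written in reverse order, with padding by zeros, as
base-8 digits. -/
def lastFour (U : List ℕ) : ℕ :=
  512 * U.getD 3 0 + 64 * U.getD 2 0 + 8 * U.getD 1 0 + U.getD 0 0

theorem getD_lt {U : List ℕ} (hU : ∀ x ∈ U, 1 ≤ x ∧ x ≤ 4) (i : ℕ) : U.getD i 0 < 8 := by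
  rw [List.getD_eq_getElem?_getD]
  rcases h : U[i]? with _ | x
  · simp
  · have := hU x (List.mem_of_getElem? h)
    simp; omega

theorem gap_spec {U : List ℕ} (hU : ∀ x ∈ U, 1 ≤ x ∧ x ≤ 4) {g a z : ℕ} (ha : 1 ≤ a)
    (h : gap (4096 * g + lastFour U) a = z + 1) : ∃ g', z = 4096 * g' + lastFour (a :: U) ∧
      ((g' = g + 1 ∧ g < 80) ∨
        CutRule g' a (U.getD 0 0) (U.getD 1 0) (U.getD 2 0) (U.getD 3 0)) := by
  have h0 := getD_lt hU 0
  have h1 := getD_lt hU 1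
  have h2 := getD_lt hU 2
  have h3 := getD_lt hU 3
  have e : lastFour (a :: U) =
      512 * U.getD 2 0 + 64 * U.getD 1 0 + 8 * U.getD 0 0 + a := rfl
  rw [e]
  unfold lastFour at h
  generalize U.getD 0 0 = p₁ at *
  generalize U.getD 1 0 = p₂ at *
  generalize U.getD 2 0 = p₃ at *
  generalize U.getD 3 0 = p₄ at *
  obtain ⟨Z, hZ⟩ : ∃ Z, Z = 4096 * g + (512 * p₄ + 64 * p₃ + 8 * p₂ + p₁) := ⟨_, rfl⟩
  rw [← hZ] at h
  have hk : keep Z a = z + 1 →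
      z = 4096 * (g + 1) + (512 * p₃ + 64 * p₂ + 8 * p₁ + a) ∧ g < 80 := by
    intro h
    rw [keep_eq] at h
    split_ifs at h
    omega
  have e1 : Z % 8 = p₁ := by omega
  have e2 : Z / 8 % 8 = p₂ := by omega
  have e3 : Z / 64 % 8 = p₃ := by omega
  have e4 : Z / 512 % 8 = p₄ := by omega
  rw [gap_eq, if_neg (by omega), e1, e2, e3, e4] at h
  split_ifs at h with hap
  · exact ⟨g + 1, (hk h).1, Or.inl ⟨rfl, (hk h).2⟩⟩
  · rcases gapAux_spec hap h with h | ⟨r, hr, hrule⟩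
    · exact ⟨g + 1, (hk h).1, Or.inl ⟨rfl, (hk h).2⟩⟩
    · rw [reset_eq] at hr
      exact ⟨r, by omega, Or.inr hrule⟩

/-- `CutRule` gives a cut after a letter `l`, whatever the rest `Q` of the string is. -/
theorem CutRule.cut {U : List ℕ} (hU : ∀ x ∈ U, 1 ≤ x ∧ x ≤ 4) {r a : ℕ}
    (h : CutRule r a (U.getD 0 0) (U.getD 1 0) (U.getD 2 0) (U.getD 3 0)) (Q : List ℕ) :
    r ≤ 4 ∧ ∃ l U₀ R, a :: U = R.reverse ++ l :: U₀ ∧ R.length = r ∧ R ≠ [] ∧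
      NeverHead l (R ++ Q) := by
  obtain ⟨ha, h4, h⟩ := h
  refine ⟨by omega, ?_⟩
  rcases h with h | h | h | h | h | h
  · obtain ⟨rfl, e⟩ := h
    match U, hU, ha, h4, e with
    | x :: y :: T, hU, ha, h4, e =>
      simp only [List.getD_cons_zero, List.getD_cons_succ] at ha h4 e
      subst e
      have hx := hU x (by simp)
      exact ⟨4, T, [x, a], by simp, rfl, by simp, (SmallRun.one Q hx.1 (by omega) ha).neverHead⟩
  · obtain ⟨rfl, e1, e2, e3⟩ := h
    match U, hU, ha, h4, e1, e2, e3 with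
    | x :: y :: z :: t :: T, hU, ha, h4, e1, e2, e3 =>
      simp only [List.getD_cons_zero, List.getD_cons_succ] at ha h4 e1 e2 e3
      subst e1 e2 e3
      have hx := hU z (by simp)
      exact ⟨4, T, [z, z, z, a], by simp, rfl, by simp,
        (SmallRun.three Q hx.1 (by omega) ha).neverHead⟩
  · obtain ⟨rfl, e1, e2, e3, e4⟩ := h
    match U, hU, ha, h4, e1, e2, e3, e4 with
    | x :: y :: z :: t :: T, hU, ha, h4, e1, e2, e3, e4 =>
      simp only [List.getD_cons_zero, List.getD_cons_succ] at ha h4 e1 e2 e3 e4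
      subst e1 e2 e3 e4
      exact ⟨2, T, [1, 1, 1, a], by simp, rfl, by simp, (ClassA.ones Q ha).neverHead⟩
  · obtain ⟨rfl, e1, e2⟩ := h
    match U, hU, ha, h4, e1, e2 with
    | x :: y :: z :: T, hU, ha, h4, e1, e2 =>
      simp only [List.getD_cons_zero, List.getD_cons_succ] at ha h4 e1 e2
      subst e1 e2
      have hx := hU y (by simp)
      exact ⟨4, T, [y, y, a], by simp, rfl, by simp,
        (SmallRun.two Q hx.1 (by omega) ha).neverHead⟩
  · obtain ⟨rfl, e1, e2, e3, e4⟩ := h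
    match U, hU, ha, h4, e1, e2, e3, e4 with
    | x :: y :: z :: t :: T, hU, ha, h4, e1, e2, e3, e4 =>
      simp only [List.getD_cons_zero, List.getD_cons_succ] at ha h4 e1 e2 e3 e4
      subst e1 e3 e4
      exact ⟨2, T, [3, y, y, a], by simp, rfl, by simp, (ClassA.three' Q e2 ha).neverHead⟩
  · obtain ⟨rfl, e1, e2, e3, e4⟩ := h
    match U, hU, ha, h4, e1, e2, e3, e4 with
    | x :: y :: z :: T, hU, ha, h4, e1, e2, e3, e4 =>
      simp only [List.getD_cons_zero, List.getD_cons_succ] at ha h4 e1 e2 e3 e4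
      subst e4
      have hy := hU y (by simp)
      refine ⟨2, T, [y, x, a], by simp, rfl, by simp, ?_⟩
      have : y = 1 ∨ y = 3 := by omega
      rcases this with rfl | rfl
      · exact (ClassA.one Q e1.symm ha).neverHead
      · exact (ClassA.three Q e1.symm ha).neverHead

/-- The windows of a string that end after the prefix `P` read so far and are longer than the
counter `g` contain a cut; the invariant of `gap`. -/
def Covered (g : ℕ) (P Q : List ℕ) : Prop :=
  ∀ W A, P = W ++ A → g < A.length → ∃ L R, A = L ++ R ∧ R ≠ [] ∧ Cut L (R ++ Q)

theorem Covered.keep {g a : ℕ} {P Q : List ℕ} (h : Covered g P (a :: Q)) :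
    Covered (g + 1) (P ++ [a]) Q := by
  intro W A e hA
  rcases List.eq_nil_or_concat A with rfl | ⟨A, b, rfl⟩
  · simp at hA
  rw [List.concat_eq_append, ← List.append_assoc] at e
  obtain ⟨e1, e2⟩ := List.append_inj' e rfl
  obtain rfl : a = b := by simpa using e2
  obtain ⟨L, R, rfl, hR, hc⟩ := h W A e1 (by simpa using hA)
  exact ⟨L, R ++ [a], by simp, by simp, by simpa using hc⟩

theorem Covered.of_cut {l : ℕ} {P R Q : List ℕ} (hR : R ≠ []) (h : NeverHead l (R ++ Q)) :
    Covered R.length (P ++ [l] ++ R) Q := by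
  intro W A e hA
  rcases List.append_eq_append_iff.1 e with ⟨D, rfl, rfl⟩ | ⟨D, e', rfl⟩
  · simp at hA
  · refine ⟨D, R, rfl, hR, by simp [hR], l, ?_, h⟩
    have hD : D ≠ [] := by rintro rfl; simp at hA
    have := congrArg List.getLast? e'
    rw [List.getLast?_append_of_ne_nil _ hD] at this
    simpa using this.symm

/-- In a string accepted by `gap`, every window of length at least 81 contains a cut. -/
theorem exists_cut (Q : List ℕ) : ∀ (U : List ℕ) (g : ℕ), (∀ x ∈ U, 1 ≤ x ∧ x ≤ 4) → g ≤ 80 →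
    Accepts gap (4096 * g + lastFour U) Q → Covered g U.reverse Q →
    ∀ W A W', U.reverse ++ Q = W ++ A ++ W' → U.length ≤ (W ++ A).length → 81 ≤ A.length →
      ∃ L R, A = L ++ R ∧ R ≠ [] ∧ Cut L (R ++ W') := by
  induction Q with
  | nil =>
    intro U g _ hg _ hc W A W' e hl hA
    have hlen := congrArg List.length e
    simp only [List.length_append, List.length_reverse, List.length_nil] at hlen hl
    obtain rfl : W' = [] := List.length_eq_zero_iff.1 (by omega)
    exact hc W A (by simpa using e) (by omega)
  | cons a Q ih =>
    rintro U g hU hg ⟨h1, h4, z, hz, hacc⟩ hc W A W' e hl hA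
    by_cases hlen : U.length = (W ++ A).length
    · obtain ⟨e1, rfl⟩ := List.append_inj e (by simpa using hlen)
      exact hc W A e1 (by omega)
    obtain ⟨g', rfl, hg'⟩ := gap_spec hU h1 hz
    have hU' : ∀ x ∈ a :: U, 1 ≤ x ∧ x ≤ 4 := by
      intro x hx
      rcases List.mem_cons.1 hx with rfl | hx
      · exact ⟨h1, h4⟩
      · exact hU x hx
    have hcov : g' ≤ 80 ∧ Covered g' (a :: U).reverse Q := by
      rcases hg' with ⟨rfl, hg'⟩ | hrule
      · exact ⟨by omega, by simpa using hc.keep⟩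
      · obtain ⟨hr, l, U₀, R, e, rfl, hR, hn⟩ := hrule.cut hU Q
        refine ⟨by omega, ?_⟩
        rw [e]
        simpa using Covered.of_cut (P := U₀.reverse) hR hn
    exact ih (a :: U) g' hU' hcov.1 hacc hcov.2 W A W' (by simpa using e)
      (by simp only [List.length_cons]; omega) hA

/-! ### Conclusion -/

-- Without this, concrete iterates of `JHC` get unfolded in the following statements.
attribute [local irreducible] Accepts TameString

theorem accepts_gap_iter {W : List ℕ} (h : Accepts dayOne 0 (clamp W)) (ht : TameString W) :
    Accepts gap 0 (clamp (JHC^[8] W)) := by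
  rw [clamp_iter ht, Function.iterate_add_apply JHC 5 3]
  exact accepts_iter (n := 5) search_dayFour_gap
    (accepts_iter (n := 3) search_dayOne_dayFour h)

theorem accepts_gap {w : List ℕ} (hw : ∀ x ∈ w, 1 ≤ x ∧ x ≤ 3) :
    Accepts gap 0 (clamp (JHC^[9] w)) ∧ TameString (JHC^[9] w) := by
  rw [Function.iterate_succ_apply JHC 8 w]
  exact ⟨accepts_gap_iter (day_one hw).1 (day_one hw).2, (day_one hw).2.iter 8⟩

theorem atom_length_le {w : List ℕ} (hw : ∀ x ∈ w, 1 ≤ x ∧ x ≤ 3) {As : List (List ℕ)}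
    (h : SplitCompound (JHC^[9] w) As) {A : List ℕ} (hA : A ∈ As) : A.length ≤ 80 := by
  by_contra hlen
  obtain ⟨B, C, rfl⟩ := List.append_of_mem hA
  obtain ⟨hacc, ht⟩ := accepts_gap hw
  have e : JHC^[9] w = B.flatten ++ A ++ C.flatten := by
    rw [h.2.1]; simp
  rw [e] at hacc ht
  obtain ⟨L, R, hLR, hR, hc⟩ := exists_cut _ [] 0 (by simp) (by omega) (by simpa [lastFour] using hacc)
    (fun W A e hA => by
      have : A = [] := (List.append_eq_nil_iff.1 e.symm).2
      simp [this] at hA)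
    (clamp B.flatten) (clamp A) (clamp C.flatten) (by simp [clamp]) (by simp)
    (by simp only [clamp, List.length_map]; omega)
  obtain ⟨L, R, rfl, rfl, rfl⟩ := List.map_eq_append_iff.1 hLR
  have hR' : R ≠ [] := by rintro rfl; exact hR rfl
  refine not_cut_atom h rfl hR' (Cut.of_clamp ?_ (by simpa [clamp] using hc))
  exact TameString.suffix (B.flatten ++ L) (by simpa using ht)

end LookSay

/-- Length bound: every atom in the splitting of a 9-day-old string has length ≤ 80. -/
theorem mature_atom_length_le_80 :
    ∀ w : List ℕ, IsString w → (∀ x ∈ w, x ∈ ({1, 2, 3} : Set ℕ)) →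
      ∀ As : List (List ℕ), SplitCompound (JHC^[9] w) As →
        ∀ A ∈ As, A.length ≤ 80 := by
  intro w _ hw As hAs A hA
  refine LookSay.atom_length_le (fun x hx => ?_) hAs hA
  have := hw x hx
  simp only [Set.mem_insert_iff, Set.mem_singleton_iff] at this
  omega
end
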